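/- Let Γ be a planar lattice that is not rational but possesses a well-rounded sublattice, let R be a coincidence reflection of Γ, and let Σ = [Γ : Γ ∩ RΓ]. Let a_Γ(n) be the number of well-rounded sublattices of Γ of index n. Then the Dirichlet series F(s) = ∑_{n≥1} a_Γ(n) n^{−s} converges for Re(s) > 1, and there exists a function G, analytic on the open half plane {s ∈ ℂ : Re(s) > 1/2}, such that F(s) = G(s) + (log 3)/(4Σ) · 1/(s − 1) for all s with Re(s) > 1; in particular, F has an analytic continuation to {Re(s) > 1/2} with a single simple pole at s = 1 of residue (log 3)/(4Σ). -/

import Mathlib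

noncomputable section

open Filter Asymptotics
open scoped RealInnerProductSpace

/-- The Euclidean plane. -/
abbrev EucPlane : Type := EuclideanSpace ℝ (Fin 2)

/-- A planar lattice: the additive subgroup generated by two linearly independent vectors. -/
def IsPlanarLattice (Λ : AddSubgroup EucPlane) : Prop :=
  ∃ v₁ v₂ : EucPlane, LinearIndependent ℝ ![v₁, v₂] ∧ Λ = AddSubgroup.closure {v₁, v₂}

/-- A subgroup `Λ` of the plane is well-rounded if it contains two `ℝ`-linearly
independent vectors, both of minimal norm among the nonzero elements of `Λ`. -/
def IsWellRounded (Λ : AddSubgroup EucPlane) : Prop :=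
  ∃ x y : EucPlane, x ∈ Λ ∧ y ∈ Λ ∧ LinearIndependent ℝ ![x, y] ∧
    (∀ z ∈ Λ, z ≠ 0 → ‖x‖ ≤ ‖z‖) ∧ (∀ z ∈ Λ, z ≠ 0 → ‖y‖ ≤ ‖z‖)

/-- A planar lattice is rational if, after rescaling by some `c > 0`, all inner
products of lattice vectors are rational. -/
def IsRationalLattice (Γ : AddSubgroup EucPlane) : Prop :=
  ∃ c : ℝ, 0 < c ∧ ∀ v ∈ Γ, ∀ w ∈ Γ, ∃ q : ℚ, c * ⟪v, w⟫ = q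

/-- The image of `Γ` under the linear isometry `R`. -/
def latticeMap (R : EucPlane ≃ₗᵢ[ℝ] EucPlane) (Γ : AddSubgroup EucPlane) :
    AddSubgroup EucPlane :=
  Γ.map (R.toLinearEquiv : EucPlane →ₗ[ℝ] EucPlane).toAddMonoidHom

/-- `R` is a coincidence reflection of `Γ`: a linear isometry of determinant `-1`
such that `Γ ∩ RΓ` has finite index in `Γ`. -/
def IsCoincidenceReflection (Γ : AddSubgroup EucPlane) (R : EucPlane ≃ₗᵢ[ℝ] EucPlane) : Prop :=
  LinearMap.det (R.toLinearEquiv : EucPlane →ₗ[ℝ] EucPlane) = -1 ∧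
    ((Γ ⊓ latticeMap R Γ).addSubgroupOf Γ).index ≠ 0

/-- The number of well-rounded sublattices of `Γ` of index `n`. -/
def countWR (Γ : AddSubgroup EucPlane) (n : ℕ) : ℕ :=
  Nat.card {Λ : AddSubgroup EucPlane // Λ ≤ Γ ∧ IsWellRounded Λ ∧
    (Λ.addSubgroupOf Γ).index = n}


theorem analytic_part (a : ℕ → ℕ) (c C : ℝ)
    (h : ∀ n : ℕ, 1 ≤ n → |∑ k ∈ Finset.Icc 1 n, (a k : ℝ) - c * n| ≤ C * √n) :
    (∀ s : ℂ, 1 < s.re → Summable (fun n : ℕ => (a n : ℂ) * (n : ℂ) ^ (-s))) ∧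
    ∃ G : ℂ → ℂ, DifferentiableOn ℂ G {s : ℂ | 1 / 2 < s.re} ∧
      ∀ s : ℂ, 1 < s.re →
        ∑' n : ℕ, (a n : ℂ) * (n : ℂ) ^ (-s) = G s + (c : ℂ) / (s - 1) := by
  have hterm : ∀ s : ℂ, 1 < s.re → (fun n : ℕ => (a n : ℂ) * (n : ℂ) ^ (-s)) =
      LSeries.term (fun n => ((a n : ℝ) : ℂ)) s := by
    intro s hs
    funext n
    have hs0 : s ≠ 0 := by rintro rfl; simp at hs; linarith
    rcases eq_or_ne n 0 with rfl | hn
    · simp [hs0]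
    · rw [LSeries.term_of_ne_zero hn, Complex.cpow_neg, div_eq_mul_inv]; simp
  have hC : 0 ≤ C := by
    have := (abs_nonneg _).trans (h 1 le_rfl)
    simpa using this
  have hO : (fun n ↦ ∑ k ∈ Finset.Icc 1 n, (a k : ℝ)) =O[atTop] fun n : ℕ ↦ (n : ℝ) ^ (1 : ℝ) := by
    refine IsBigO.of_bound (C + |c|) ?_
    filter_upwards [eventually_ge_atTop 1] with n hn
    have h1 := h n hn
    have hn' : (1 : ℝ) ≤ n := by exact_mod_cast hn
    have h2 : √(n : ℝ) ≤ n := by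
      rw [Real.sqrt_le_left (by linarith)]; nlinarith
    rw [Real.rpow_one, Real.norm_eq_abs, Real.norm_eq_abs, abs_of_pos (a := (n : ℝ)) (by linarith)]
    calc |∑ k ∈ Finset.Icc 1 n, (a k : ℝ)|
        = |(∑ k ∈ Finset.Icc 1 n, (a k : ℝ) - c * n) + c * n| := by congr 1; ring
      _ ≤ |∑ k ∈ Finset.Icc 1 n, (a k : ℝ) - c * n| + |c * n| := abs_add_le _ _
      _ ≤ C * n + |c| * n := by
          rw [abs_mul, abs_of_pos (a := (n : ℝ)) (by linarith)]
          have := mul_le_mul_of_nonneg_left h2 hC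
          linarith
      _ = _ := by ring
  have hsum : ∀ s : ℂ, 1 < s.re → LSeriesSummable (fun n => ((a n : ℝ) : ℂ)) s := fun s hs =>
    LSeriesSummable_of_sum_norm_bigO_and_nonneg hO (fun n => Nat.cast_nonneg _) zero_le_one hs
  refine ⟨fun s hs => by rw [hterm s hs]; exact hsum s hs, ?_⟩
  set S : ℝ → ℂ := fun t => ∑ k ∈ Finset.Icc 1 ⌊t⌋₊, ((a k : ℝ) : ℂ) with hS
  set E : ℝ → ℂ := (Set.Ioi (1 : ℝ)).indicator (fun t => S t - c * t) with hE
  have hSloc : MeasureTheory.LocallyIntegrableOn S (Set.Ici 1) := by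
    have := locallyIntegrableOn_mul_sum_Icc (fun n => ((a n : ℝ) : ℂ)) (m := 1) (a := 1) (g := fun _ => 1) zero_le_one
      ((MeasureTheory.locallyIntegrable_const (1:ℂ)).locallyIntegrableOn _)
    simpa [hS] using this
  have hSc : MeasureTheory.LocallyIntegrableOn (fun t => S t - c * t) (Set.Ici 1) :=
    hSloc.sub ((by fun_prop : Continuous fun t : ℝ => (c : ℂ) * t).locallyIntegrable.locallyIntegrableOn _)
  have hEloc : MeasureTheory.LocallyIntegrableOn E (Set.Ioi 0) := by
    refine (MeasureTheory.locallyIntegrableOn_iff isLocallyClosed_Ioi).2 fun K _ hK => ?_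
    rw [hE, MeasureTheory.IntegrableOn, MeasureTheory.integrable_indicator_iff measurableSet_Ioi,
      MeasureTheory.IntegrableOn, MeasureTheory.Measure.restrict_restrict measurableSet_Ioi]
    refine MeasureTheory.IntegrableOn.mono_set (t := K ∩ Set.Ici 1) ?_
      (fun t ht => ⟨ht.2, Set.mem_Ici.2 (le_of_lt ht.1)⟩)
    exact hSc.integrableOn_compact_subset Set.inter_subset_right (hK.inter_right isClosed_Ici)
  have hEbound : ∀ t : ℝ, 1 ≤ t → ‖S t - c * t‖ ≤ (C + |c|) * √t := by
    intro t ht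
    have h1 := h ⌊t⌋₊ (Nat.one_le_floor_iff _ |>.2 ht)
    have h3 : (1:ℝ) ≤ √t := by rwa [Real.one_le_sqrt]
    have h4 : √(⌊t⌋₊ : ℝ) ≤ √t := Real.sqrt_le_sqrt (Nat.floor_le (by linarith))
    have h5 : S t - c * t = (((∑ k ∈ Finset.Icc 1 ⌊t⌋₊, (a k : ℝ) - c * ⌊t⌋₊) - c * (t - ⌊t⌋₊) : ℝ) : ℂ) := by
      simp only [hS]; push_cast; ring
    rw [h5, Complex.norm_real, Real.norm_eq_abs]
    refine (abs_sub _ _).trans ?_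
    have h6 : |c * (t - ⌊t⌋₊)| ≤ |c| * 1 := by
      rw [abs_mul]
      refine mul_le_mul_of_nonneg_left ?_ (abs_nonneg _)
      rw [abs_le]; constructor <;> linarith [Nat.floor_le (a := t) (by linarith), Nat.lt_floor_add_one t]
    nlinarith [mul_le_mul_of_nonneg_left h4 hC, mul_le_mul_of_nonneg_left h3 (abs_nonneg c)]
  have hEtop : E =O[atTop] (fun t : ℝ => t ^ (-(-(1/2 : ℝ)))) := by
    refine IsBigO.of_bound (C + |c|) ?_
    filter_upwards [eventually_gt_atTop 1] with t ht
    rw [hE, Set.indicator_of_mem (Set.mem_Ioi.2 ht), neg_neg, ← Real.sqrt_eq_rpow, Real.norm_eq_abs,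
      abs_of_nonneg (Real.sqrt_nonneg _)]
    exact hEbound t ht.le
  have hEbot : ∀ b : ℝ, E =O[nhdsWithin 0 (Set.Ioi 0)] (fun t : ℝ => t ^ (-b)) := by
    intro b
    refine IsBigO.of_bound 1 ?_
    filter_upwards [mem_nhdsWithin_of_mem_nhds (Iio_mem_nhds (zero_lt_one))] with t ht
    rw [hE, Set.indicator_of_notMem (by simpa using le_of_lt ht)]
    simp
  have hdiff : ∀ s : ℂ, 1 / 2 < s.re → DifferentiableAt ℂ (mellin E) (-s) := by
    intro s hs
    exact mellin_differentiableAt_of_isBigO_rpow (a := -(1/2)) (b := (-s).re - 1) hEloc hEtop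
      (by simp; linarith) (hEbot _) (by simp)
  refine ⟨fun s => c + s * mellin E (-s), ?_, ?_⟩
  · intro s hs
    refine DifferentiableAt.differentiableWithinAt ?_
    have := (hdiff s hs).comp s (f := fun s : ℂ => -s) (by fun_prop)
    exact (differentiableAt_const _).add (differentiableAt_id.mul this)
  · intro s hs
    have hs1 : s - 1 ≠ 0 := by
      intro h0; have : s = 1 := by linear_combination h0
      subst this; simp at hs
    have hL : ∑' n : ℕ, (a n : ℂ) * (n : ℂ) ^ (-s) = LSeries (fun n => ((a n : ℝ) : ℂ)) s := by
      rw [hterm s hs]; rfl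
    rw [hL, LSeries_eq_mul_integral_of_nonneg (fun n => (a n : ℝ)) zero_le_one hs hO (fun n => Nat.cast_nonneg _)]
    have hi1 : MeasureTheory.IntegrableOn (fun t : ℝ => (c : ℂ) * (t : ℂ) ^ (-s)) (Set.Ioi 1) :=
      (integrableOn_Ioi_cpow_of_lt (by simpa using hs) zero_lt_one).const_mul _
    have hv1 : ∫ t in Set.Ioi (1:ℝ), (c : ℂ) * (t : ℂ) ^ (-s) = c / (s - 1) := by
      rw [MeasureTheory.integral_const_mul, integral_Ioi_cpow_of_lt (by simpa using hs) zero_lt_one]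
      have : -s + 1 ≠ 0 := by intro h0; apply hs1; linear_combination -h0
      simp; field_simp; ring
    have hm : MellinConvergent E (-s) :=
      mellinConvergent_of_isBigO_rpow (a := -(1/2)) (b := (-s).re - 1) hEloc hEtop
        (by simp; linarith) (hEbot _) (by simp)
    have hfun : (fun t : ℝ => (t : ℂ) ^ (-s - 1) • E t) =
        (Set.Ioi (1:ℝ)).indicator (fun t => (S t - c * t) * (t : ℂ) ^ (-(s + 1))) := by
      funext t
      by_cases ht : t ∈ Set.Ioi (1:ℝ)
      · rw [hE, Set.indicator_of_mem ht, Set.indicator_of_mem ht, smul_eq_mul, mul_comm,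
          show -s - 1 = -(s + 1) by ring]
      · rw [hE, Set.indicator_of_notMem ht, Set.indicator_of_notMem ht, smul_zero]
    have hinter : Set.Ioi (0:ℝ) ∩ Set.Ioi 1 = Set.Ioi 1 :=
      Set.inter_eq_right.2 (Set.Ioi_subset_Ioi zero_le_one)
    have hmel : mellin E (-s) = ∫ t in Set.Ioi (1:ℝ), (S t - c * t) * (t : ℂ) ^ (-(s + 1)) := by
      rw [mellin, hfun, MeasureTheory.setIntegral_indicator measurableSet_Ioi, hinter]
    have hi2 : MeasureTheory.IntegrableOn
        (fun t : ℝ => (S t - c * t) * (t : ℂ) ^ (-(s + 1))) (Set.Ioi 1) := by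
      rw [MellinConvergent, hfun, MeasureTheory.IntegrableOn,
        MeasureTheory.integrable_indicator_iff measurableSet_Ioi, MeasureTheory.IntegrableOn,
        MeasureTheory.Measure.restrict_restrict measurableSet_Ioi, Set.inter_comm, hinter] at hm
      exact hm
    have key : ∫ t in Set.Ioi (1:ℝ), S t * (t : ℂ) ^ (-(s + 1)) = mellin E (-s) + c / (s - 1) := by
      rw [hmel, ← hv1, ← MeasureTheory.integral_add hi2 hi1]
      refine MeasureTheory.setIntegral_congr_fun measurableSet_Ioi ?_
      intro t ht
      have ht0 : (t : ℂ) ≠ 0 := by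
        have : (1:ℝ) < t := ht
        exact_mod_cast (by linarith : t ≠ 0)
      have : (t : ℂ) ^ (-s) = t * (t : ℂ) ^ (-(s + 1)) := by
        rw [show -s = 1 + (-(s+1)) by ring, Complex.cpow_add _ _ ht0, Complex.cpow_one]
      simp only [this]; ring
    rw [key]
    field_simp
    ring


theorem prog_count (d : ℕ) (hd : 0 < d) (l : ℕ) (A B : ℝ) (hA : 0 ≤ A) (hAB : A ≤ B) :
    |((((Finset.Ioc ⌊A⌋₊ ⌊B⌋₊).filter (fun k => k ≡ l [MOD d])).card : ℝ)) - (B - A) / d| ≤ 3 := by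
  have h := Nat.Ioc_filter_modEq_card ⌊A⌋₊ ⌊B⌋₊ hd l
  have h' : (((((Finset.Ioc ⌊A⌋₊ ⌊B⌋₊).filter (fun k => k ≡ l [MOD d])).card : ℕ) : ℤ) : ℝ) = _ := congrArg (Int.cast : ℤ → ℝ) h
  rw [Int.cast_natCast] at h'
  rw [h']
  have h1 := Int.floor_le (((⌊A⌋₊ : ℚ) - l) / d)
  have h2 := Int.lt_floor_add_one (((⌊A⌋₊ : ℚ) - l) / d)
  have h3 := Int.floor_le (((⌊B⌋₊ : ℚ) - l) / d)
  have h4 := Int.lt_floor_add_one (((⌊B⌋₊ : ℚ) - l) / d)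
  have h5 : ⌊((⌊A⌋₊ : ℚ) - l) / d⌋ ≤ ⌊((⌊B⌋₊ : ℚ) - l) / d⌋ := by
    apply Int.floor_le_floor
    have : ((⌊A⌋₊ : ℕ) : ℚ) ≤ (⌊B⌋₊ : ℕ) := by exact_mod_cast Nat.floor_le_floor hAB
    gcongr
  rw [max_eq_left (by linarith)]
  have h1' : ((⌊((⌊A⌋₊ : ℚ) - l) / d⌋ : ℤ) : ℝ) ≤ ((⌊A⌋₊ : ℝ) - l) / d := by exact_mod_cast h1
  have h2' : ((⌊A⌋₊ : ℝ) - l) / d < ((⌊((⌊A⌋₊ : ℚ) - l) / d⌋ : ℤ) : ℝ) + 1 := by exact_mod_cast h2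
  have h3' : ((⌊((⌊B⌋₊ : ℚ) - l) / d⌋ : ℤ) : ℝ) ≤ ((⌊B⌋₊ : ℝ) - l) / d := by exact_mod_cast h3
  have h4' : ((⌊B⌋₊ : ℝ) - l) / d < ((⌊((⌊B⌋₊ : ℚ) - l) / d⌋ : ℤ) : ℝ) + 1 := by exact_mod_cast h4
  have hd' : (1 : ℝ) ≤ d := by exact_mod_cast hd
  have a1 := Nat.floor_le hA
  have a2 := Nat.lt_floor_add_one A
  have a3 := Nat.floor_le (hA.trans hAB)
  have a4 := Nat.lt_floor_add_one B
  have e1 : |((⌊B⌋₊ : ℝ) - l) / d - ((⌊A⌋₊ : ℝ) - l) / d - (B - A) / d| ≤ 1 := by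
    rw [← sub_div, ← sub_div, abs_div, abs_of_pos (a := (d : ℝ)) (by linarith), div_le_one (by linarith)]
    refine le_trans ?_ hd'
    rw [abs_le]; constructor <;> linarith
  rw [abs_le] at e1 ⊢
  push_cast
  constructor <;> linarith [e1.1, e1.2]

theorem harmonic_bound (r : ℝ) (hr : 1 ≤ r) :
    |(harmonic ⌊r⌋₊ : ℝ) - (Real.log r + Real.eulerMascheroniConstant)| ≤ 2 / r := by
  have hL : 1 ≤ ⌊r⌋₊ := (Nat.one_le_floor_iff _).2 hr
  have hL' : (1 : ℝ) ≤ ⌊r⌋₊ := by exact_mod_cast hL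
  have a1 := Nat.floor_le (a := r) (by linarith)
  have a2 := Nat.lt_floor_add_one r
  have h1 := Real.eulerMascheroniSeq_lt_eulerMascheroniConstant ⌊r⌋₊
  have h2 := Real.eulerMascheroniConstant_lt_eulerMascheroniSeq' ⌊r⌋₊
  rw [Real.eulerMascheroniSeq] at h1
  rw [Real.eulerMascheroniSeq', if_neg (by omega)] at h2
  have h3 : Real.log ⌊r⌋₊ ≤ Real.log r := Real.log_le_log (by linarith) a1
  have h4 : Real.log r ≤ Real.log (⌊r⌋₊ + 1) := Real.log_le_log (by linarith) a2.le
  have h5 : Real.log (⌊r⌋₊ + 1) - Real.log ⌊r⌋₊ ≤ 1 / ⌊r⌋₊ := by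
    rw [← Real.log_div (by linarith) (by linarith)]
    refine (Real.log_le_sub_one_of_pos (by positivity)).trans (le_of_eq ?_)
    field_simp; ring
  have h6 : 1 / (⌊r⌋₊ : ℝ) ≤ 2 / r := by
    rw [div_le_div_iff₀ (by linarith) (by linarith)]; linarith
  rw [abs_le]; constructor <;> linarith

theorem hyp_count (β : ℝ) (hβ : 0 < β) (d : ℕ) (hd : 0 < d) (Y : ℝ) (hY : 1 ≤ √(β * Y)) (n : ℕ) (hn : Y ≤ n) :
    |((((Finset.Icc 1 n ×ˢ Finset.Icc 1 n).filter (fun p : ℕ × ℕ =>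
      ((p.1 : ℝ) * p.2 ≤ Y) ∧ p.1 ≡ p.2 [MOD d] ∧ (p.2 : ℝ) < β * p.1)).card : ℝ)) -
      Y / d * (Real.log √(β * Y) + Real.eulerMascheroniConstant - 1 / 2)| ≤ (3 / β + 3) * √(β * Y) := by
  set r := √(β * Y) with hr
  have hr2 : r ^ 2 = β * Y := by
    rw [hr, Real.sq_sqrt]
    by_contra h
    push Not at h
    rw [hr, Real.sqrt_eq_zero_of_nonpos h.le] at hY; linarith
  have hY0 : 0 < Y := by
    have : 0 < β * Y := by rw [← hr2]; positivity
    exact (mul_pos_iff_of_pos_left hβ).1 this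
  set L := ⌊r⌋₊ with hL
  have a1 : (L : ℝ) ≤ r := Nat.floor_le (a := r) (by linarith)
  have a2 : r < L + 1 := Nat.lt_floor_add_one r
  have hd' : (1 : ℝ) ≤ d := by exact_mod_cast hd
  -- card as a sum
  have hcard : ((Finset.Icc 1 n ×ˢ Finset.Icc 1 n).filter (fun p : ℕ × ℕ =>
      ((p.1 : ℝ) * p.2 ≤ Y) ∧ p.1 ≡ p.2 [MOD d] ∧ (p.2 : ℝ) < β * p.1)).card =
      ∑ l ∈ Finset.Icc 1 L, ((Finset.Ioc ⌊(l : ℝ) / β⌋₊ ⌊Y / l⌋₊).filter (fun k => k ≡ l [MOD d])).card := by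
    rw [← Finset.card_sigma]
    refine Finset.card_bij' (fun p _ => ⟨p.2, p.1⟩) (fun q _ => (q.2, q.1)) ?_ ?_ ?_ ?_
    · rintro ⟨k, l⟩ hp
      simp only [Finset.mem_filter, Finset.mem_product, Finset.mem_Icc, Finset.mem_sigma, Finset.mem_Ioc] at hp ⊢
      obtain ⟨⟨⟨hk1, hk2⟩, hl1, hl2⟩, h1, h2, h3⟩ := hp
      have hl0 : (1:ℝ) ≤ l := by exact_mod_cast hl1
      have hk0 : (1:ℝ) ≤ k := by exact_mod_cast hk1
      refine ⟨⟨hl1, ?_⟩, ⟨?_, ?_⟩, h2⟩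
      · rw [hL, Nat.le_floor_iff (by linarith)]
        refine Real.le_sqrt_of_sq_le ?_
        nlinarith
      · rw [Nat.floor_lt (by positivity), div_lt_iff₀ hβ]; linarith
      · rw [Nat.le_floor_iff (by positivity), le_div_iff₀ (by linarith)]; exact h1
    · rintro ⟨l, k⟩ hp
      simp only [Finset.mem_filter, Finset.mem_product, Finset.mem_Icc, Finset.mem_sigma, Finset.mem_Ioc] at hp ⊢
      obtain ⟨⟨hl1, hl2⟩, ⟨hk1, hk2⟩, h2⟩ := hp
      have hl0 : (1:ℝ) ≤ l := by exact_mod_cast hl1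
      rw [Nat.floor_lt (by positivity), div_lt_iff₀ hβ] at hk1
      rw [Nat.le_floor_iff (by positivity), le_div_iff₀ (by linarith)] at hk2
      have hk0 : 1 ≤ k := by
        rcases Nat.eq_zero_or_pos k with rfl | h
        · simp at hk1; linarith
        · exact h
      have hk0' : (1:ℝ) ≤ k := by exact_mod_cast hk0
      refine ⟨⟨⟨hk0, ?_⟩, hl1, ?_⟩, hk2, h2, by linarith⟩
      · have : (k : ℝ) ≤ n := by nlinarith
        exact_mod_cast this
      · have : (l : ℝ) ≤ n := by nlinarith
        exact_mod_cast this
    · intros; rfl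
    · intros; rfl
  rw [hcard]
  have hsum : |((∑ l ∈ Finset.Icc 1 L, ((Finset.Ioc ⌊(l : ℝ) / β⌋₊ ⌊Y / l⌋₊).filter (fun k => k ≡ l [MOD d])).card : ℕ) : ℝ)
      - ∑ l ∈ Finset.Icc 1 L, (Y / l - l / β) / d| ≤ 3 * L := by
    push_cast
    rw [← Finset.sum_sub_distrib]
    refine (Finset.abs_sum_le_sum_abs _ _).trans ?_
    refine (Finset.sum_le_card_nsmul _ _ 3 ?_).trans (by simp [mul_comm])
    intro l hl
    rw [Finset.mem_Icc] at hl
    have hl0 : (1:ℝ) ≤ l := by exact_mod_cast hl.1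
    have hl1 : (l:ℝ) ≤ L := by exact_mod_cast hl.2
    apply prog_count d hd l _ _ (by positivity)
    rw [div_le_div_iff₀ hβ (by linarith)]
    nlinarith
  have hsum2 : ∑ l ∈ Finset.Icc 1 L, (Y / (l:ℝ) - l / β) / d = (Y * (harmonic L : ℝ) - (L * (L + 1)) / (2 * β)) / d := by
    rw [← Finset.sum_div, Finset.sum_sub_distrib]
    congr 2
    · rw [harmonic_eq_sum_Icc]; push_cast; rw [Finset.mul_sum]; rfl
    · rw [← Finset.sum_div]
      have : ∑ l ∈ Finset.Icc 1 L, (l : ℝ) = L * (L + 1) / 2 := by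
        clear_value L
        clear hcard hsum a1 a2 hL
        induction L with
        | zero => simp
        | succ m ih => rw [Finset.sum_Icc_succ_top (by omega), ih]; push_cast; ring
      rw [this]; field_simp
  have hH := harmonic_bound r hY
  rw [← hL] at hH
  have hE1 : |Y * ((harmonic L : ℝ) - (Real.log r + Real.eulerMascheroniConstant))| ≤ 2 * r / β := by
    rw [abs_mul, abs_of_pos hY0]
    refine (mul_le_mul_of_nonneg_left hH hY0.le).trans (le_of_eq ?_)
    have : Y = r ^ 2 / β := by rw [hr2]; field_simp
    rw [this]; field_simp
  have hE2 : |(L * (L + 1) : ℝ) / (2 * β) - Y / 2| ≤ r / β := by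
    have : (L * (L + 1) : ℝ) / (2 * β) - Y / 2 = (L * (L + 1) - r ^ 2) / (2 * β) := by
      rw [hr2]; field_simp
    rw [this, abs_div, abs_of_pos (a := 2 * β) (by positivity), div_le_div_iff₀ (by positivity) hβ]
    have : |(L * (L + 1) : ℝ) - r ^ 2| ≤ 2 * r := by
      have : (0:ℝ) ≤ L := Nat.cast_nonneg _
      rw [abs_le]; constructor <;> nlinarith
    nlinarith
  have hE3 : |(Y * (harmonic L : ℝ) - (L * (L + 1)) / (2 * β)) / d -
      Y / d * (Real.log r + Real.eulerMascheroniConstant - 1 / 2)| ≤ 3 / β * r := by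
    have : (Y * (harmonic L : ℝ) - (L * (L + 1)) / (2 * β)) / d -
      Y / d * (Real.log r + Real.eulerMascheroniConstant - 1 / 2) =
      (Y * ((harmonic L : ℝ) - (Real.log r + Real.eulerMascheroniConstant)) - ((L * (L + 1) : ℝ) / (2 * β) - Y / 2)) / d := by
      ring
    rw [this, abs_div, abs_of_pos (a := (d:ℝ)) (by linarith), div_le_iff₀ (by linarith)]
    refine (abs_sub _ _).trans ?_
    have h0 : 3 / β * r = 2 * r / β + r / β := by ring
    have h1 : 0 ≤ 3 / β * r := by positivity
    nlinarith
  rw [hsum2] at hsum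
  rw [abs_le] at *
  constructor <;> linarith [hsum.1, hsum.2, hE3.1, hE3.2]

theorem counting_part (α : ℝ) (hα : 0 < α) (d e : ℕ) (hd : 0 < d) (he : 0 < e) (a : ℕ → ℕ)
    (ha : ∀ n : ℕ, 1 ≤ n → a n = Nat.card {p : ℕ × ℕ // 1 ≤ p.1 ∧ 1 ≤ p.2 ∧ p.1 ≡ p.2 [MOD d] ∧
      α * p.1 ≤ p.2 ∧ (p.2 : ℝ) < 3 * α * p.1 ∧ e * (p.1 * p.2) = n}) :
    ∃ C : ℝ, ∀ n : ℕ, 1 ≤ n →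
      |∑ k ∈ Finset.Icc 1 n, (a k : ℝ) - Real.log 3 / (2 * d * e) * n| ≤ C * √n := by
  have he' : (1 : ℝ) ≤ e := by exact_mod_cast he
  have hd' : (1 : ℝ) ≤ d := by exact_mod_cast hd
  -- the sum as a cardinality
  have hcard : ∀ n : ℕ, ∑ k ∈ Finset.Icc 1 n, a k =
      ((Finset.Icc 1 n ×ˢ Finset.Icc 1 n).filter (fun p : ℕ × ℕ =>
        (p.1 : ℝ) * p.2 ≤ (n : ℝ) / e ∧ p.1 ≡ p.2 [MOD d] ∧ (p.2 : ℝ) < 3 * α * p.1 ∧ ¬ (p.2 : ℝ) < α * p.1)).card := by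
    intro n
    rw [Finset.card_eq_sum_card_fiberwise (f := fun p : ℕ × ℕ => e * (p.1 * p.2)) (t := Finset.Icc 1 n)]
    · refine Finset.sum_congr rfl fun m hm => ?_
      rw [Finset.mem_Icc] at hm
      rw [ha m hm.1]
      refine Nat.subtype_card _ ?_
      rintro ⟨k, l⟩
      simp only [Finset.mem_filter, Finset.mem_product, Finset.mem_Icc, not_lt]
      constructor
      · rintro ⟨⟨⟨⟨h1, h2⟩, h3, h4⟩, h5, h6, h7, h8⟩, h9⟩
        exact ⟨h1, h3, h6, h8, h7, h9⟩
      · rintro ⟨h1, h2, h3, h4, h5, h6⟩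
        have hk : k ≤ n := by nlinarith [Nat.mul_le_mul h1 h2, Nat.mul_le_mul he (Nat.le_refl (k*l)), Nat.mul_le_mul (Nat.le_refl k) h2]
        have hl : l ≤ n := by nlinarith [Nat.mul_le_mul h1 h2, Nat.mul_le_mul he (Nat.le_refl (k*l)), Nat.mul_le_mul h1 (Nat.le_refl l)]
        refine ⟨⟨⟨⟨h1, hk⟩, h2, hl⟩, ?_, h3, h5, h4⟩, h6⟩
        rw [le_div_iff₀ (by linarith)]
        have : e * (k * l) ≤ n := by omega
        have : (e * (k * l) : ℝ) ≤ n := by exact_mod_cast this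
        linarith
    · rintro ⟨k, l⟩ h
      simp only [Finset.mem_coe, Finset.mem_filter, Finset.mem_product, Finset.mem_Icc] at h ⊢
      obtain ⟨⟨⟨h1, h2⟩, h3, h4⟩, h5, -⟩ := h
      rw [le_div_iff₀ (by linarith)] at h5
      refine ⟨Nat.mul_pos he (Nat.mul_pos h1 h3), ?_⟩
      have : ((e * (k * l) : ℕ) : ℝ) ≤ n := by push_cast; linarith
      exact_mod_cast this
  have hcard2 : ∀ n : ℕ, ∑ k ∈ Finset.Icc 1 n, (a k : ℝ) =
      (((Finset.Icc 1 n ×ˢ Finset.Icc 1 n).filter (fun p : ℕ × ℕ =>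
        (p.1 : ℝ) * p.2 ≤ (n : ℝ) / e ∧ p.1 ≡ p.2 [MOD d] ∧ (p.2 : ℝ) < 3 * α * p.1)).card : ℝ) -
      (((Finset.Icc 1 n ×ˢ Finset.Icc 1 n).filter (fun p : ℕ × ℕ =>
        (p.1 : ℝ) * p.2 ≤ (n : ℝ) / e ∧ p.1 ≡ p.2 [MOD d] ∧ (p.2 : ℝ) < α * p.1)).card : ℝ) := by
    intro n
    rw [← Nat.cast_sum, hcard, eq_sub_iff_add_eq, ← Nat.cast_add]
    congr 1
    rw [← Finset.card_union_of_disjoint]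
    · congr 1
      ext ⟨k, l⟩
      simp only [Finset.mem_union, Finset.mem_filter, Finset.mem_product, Finset.mem_Icc]
      have : (l : ℝ) < α * k → (l : ℝ) < 3 * α * k := by
        intro h; have : 0 ≤ α * k := by positivity
        linarith
      tauto
    · rw [Finset.disjoint_filter]
      rintro ⟨k, l⟩ _ h1 h2
      exact h1.2.2.2 h2.2.2
  have hO : (fun n : ℕ => ∑ k ∈ Finset.Icc 1 n, (a k : ℝ) - Real.log 3 / (2 * d * e) * n) =O[atTop]
      (fun n : ℕ => √(n : ℝ)) := by
    refine IsBigO.of_bound ((3 / (3 * α) + 3) * √(3 * α) + (3 / α + 3) * √α) ?_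
    filter_upwards [(tendsto_natCast_atTop_atTop (R := ℝ)).eventually_ge_atTop (e / α), eventually_ge_atTop 1] with n hn hn1
    have hn1' : (1:ℝ) ≤ n := by exact_mod_cast hn1
    set Y : ℝ := (n : ℝ) / e with hY
    have hYn : Y ≤ n := div_le_self (by linarith) he'
    have hY0 : 0 < Y := by positivity
    have h1 : 1 ≤ α * Y := by
      rw [div_le_iff₀ hα] at hn
      rw [hY, ← mul_div_assoc, le_div_iff₀ (by linarith)]; linarith
    have b1 := hyp_count (3 * α) (by positivity) d hd Y (Real.one_le_sqrt.2 (by linarith)) n hYn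
    have b2 := hyp_count α hα d hd Y (Real.one_le_sqrt.2 h1) n hYn
    rw [hcard2 n, Real.norm_eq_abs, Real.norm_eq_abs, abs_of_nonneg (Real.sqrt_nonneg _)]
    have hlog : Real.log √(3 * α * Y) = Real.log √(α * Y) + Real.log 3 / 2 := by
      rw [Real.log_sqrt (by positivity), Real.log_sqrt (by positivity), mul_assoc,
        Real.log_mul (by norm_num) (by positivity)]; ring
    rw [hlog] at b1
    have s1 : √(3 * α * Y) ≤ √(3 * α) * √n := by
      rw [Real.sqrt_mul (by positivity)]
      exact mul_le_mul_of_nonneg_left (Real.sqrt_le_sqrt hYn) (Real.sqrt_nonneg _)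
    have s2 : √(α * Y) ≤ √α * √n := by
      rw [Real.sqrt_mul (by positivity)]
      exact mul_le_mul_of_nonneg_left (Real.sqrt_le_sqrt hYn) (Real.sqrt_nonneg _)
    have t1 := b1.trans (mul_le_mul_of_nonneg_left s1 (by positivity))
    have t2 := b2.trans (mul_le_mul_of_nonneg_left s2 (by positivity))
    have hmain : Real.log 3 / (2 * d * e) * n = Y / d * (Real.log 3 / 2) := by
      rw [hY]; field_simp
    rw [hmain]
    rw [abs_le] at *
    constructor <;> linarith [t1.1, t1.2, t2.1, t2.2]
  obtain ⟨C, -, hC⟩ := bound_of_isBigO_nat_atTop hO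
  refine ⟨C, fun n hn => ?_⟩
  have hs : √(n : ℝ) ≠ 0 := by
    have : (0:ℝ) < n := by exact_mod_cast hn
    positivity
  have := hC hs
  rwa [Real.norm_eq_abs, Real.norm_eq_abs, abs_of_nonneg (Real.sqrt_nonneg _)] at this

/-- The determinant of two vectors of the plane. -/
def pdet (x y : EucPlane) : ℝ := x 0 * y 1 - x 1 * y 0

theorem plane_ext {x y : EucPlane} (h0 : x 0 = y 0) (h1 : x 1 = y 1) : x = y := by
  ext i; fin_cases i
  · exact h0
  · exact h1

theorem linInd_iff (x y : EucPlane) : LinearIndependent ℝ ![x, y] ↔ pdet x y ≠ 0 := by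
  rw [LinearIndependent.pair_iff]
  constructor
  · intro h hd
    rw [pdet] at hd
    have h1 := h (y 0) (-(x 0)) (by
      apply plane_ext <;> simp <;> first | linear_combination hd | linear_combination -hd | linear_combination (0:ℝ) * hd)
    have h2 := h (y 1) (-(x 1)) (by
      apply plane_ext <;> simp <;> first | linear_combination hd | linear_combination -hd | linear_combination (0:ℝ) * hd)
    have h3 := h 1 0 (by
      apply plane_ext <;> simp
      · simpa using h1.2
      · simpa using h2.2)
    exact one_ne_zero h3.1
  · intro hd s t h
    have e0 : s * x 0 + t * y 0 = 0 := by simpa using congrArg (fun z : EucPlane => z 0) h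
    have e1 : s * x 1 + t * y 1 = 0 := by simpa using congrArg (fun z : EucPlane => z 1) h
    constructor
    · have : s * pdet x y = 0 := by rw [pdet]; linear_combination y 1 * e0 - y 0 * e1
      exact (mul_eq_zero.1 this).resolve_right hd
    · have : t * pdet x y = 0 := by rw [pdet]; linear_combination x 0 * e1 - x 1 * e0
      exact (mul_eq_zero.1 this).resolve_right hd

theorem exists_coord {x y : EucPlane} (h : pdet x y ≠ 0) (z : EucPlane) :
    ∃ s t : ℝ, z = s • x + t • y := by
  refine ⟨pdet z y / pdet x y, pdet x z / pdet x y, ?_⟩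
  apply plane_ext <;> simp <;> field_simp <;> simp only [pdet] <;> ring

theorem coord_unique {x y : EucPlane} (h : pdet x y ≠ 0) {s t s' t' : ℝ}
    (he : s • x + t • y = s' • x + t' • y) : s = s' ∧ t = t' := by
  have := LinearIndependent.pair_iff.1 ((linInd_iff x y).2 h) (s - s') (t - t')
    (by rw [sub_smul, sub_smul, ← add_sub_add_comm, he, sub_self])
  exact ⟨by linarith [this.1], by linarith [this.2]⟩

theorem plane_inner (x y : EucPlane) : ⟪x, y⟫ = x 0 * y 0 + x 1 * y 1 := by
  simp [PiLp.inner_apply, mul_comm]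

theorem normsq_comb (x y : EucPlane) (s t : ℝ) :
    ‖s • x + t • y‖ ^ 2 = s ^ 2 * ‖x‖ ^ 2 + t ^ 2 * ‖y‖ ^ 2 + 2 * (s * t) * ⟪x, y⟫ := by
  simp only [← real_inner_self_eq_norm_sq, plane_inner]
  simp; ring

theorem mem_closure_pair_real {x y z : EucPlane} :
    z ∈ AddSubgroup.closure ({x, y} : Set EucPlane) ↔ ∃ m n : ℤ, z = (m : ℝ) • x + (n : ℝ) • y := by
  rw [AddSubgroup.mem_closure_pair]
  simp only [Int.cast_smul_eq_zsmul, eq_comm]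

theorem zsmul_real_mem {Γ : AddSubgroup EucPlane} {x : EucPlane} (h : x ∈ Γ) (m : ℤ) :
    (m : ℝ) • x ∈ Γ := by
  rw [Int.cast_smul_eq_zsmul]; exact Γ.zsmul_mem h m

theorem relIndex_real {E : Type*} [AddCommGroup E] [Module ℝ E]
    (L₁ L₂ : AddSubgroup E) (H : L₁ ≤ L₂) {ι : Type*} [DecidableEq ι] [Fintype ι]
    (b₁ b₂ : Module.Basis ι ℝ E) (h₁ : L₁ = .closure (Set.range b₁)) (h₂ : L₂ = .closure (Set.range b₂)) :
    (L₁.relIndex L₂ : ℝ) = |b₂.det b₁| := by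
  rw [AddSubgroup.relIndex_eq_natAbs_det L₁ L₂ H (b₁.addSubgroupOfClosure L₁ h₁)
    (b₂.addSubgroupOfClosure L₂ h₂), Nat.cast_natAbs, Int.cast_abs]
  change |algebraMap ℤ ℝ _| = _
  rw [Module.Basis.det_apply, Module.Basis.det_apply, RingHom.map_det]
  congr; ext i j
  simp only [RingHom.mapMatrix_apply, Matrix.map_apply, Module.Basis.toMatrix_apply]
  refine (Module.Basis.addSubgroupOfClosure_repr_apply L₂ b₂ h₂ _ i).trans ?_
  congr 2
  exact Module.Basis.addSubgroupOfClosure_apply L₁ b₁ h₁ j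

theorem relIndex_pair {p q x y : EucPlane} (hpq : pdet p q ≠ 0) (hxy : pdet x y ≠ 0)
    (H : AddSubgroup.closure {x, y} ≤ AddSubgroup.closure {p, q}) {m n m' n' : ℝ}
    (hx : x = m • p + n • q) (hy : y = m' • p + n' • q) :
    ((AddSubgroup.closure {x, y}).relIndex (AddSubgroup.closure {p, q}) : ℝ) = |m * n' - n * m'| := by
  have c : Fintype.card (Fin 2) = Module.finrank ℝ EucPlane := by simp
  let b₁ := basisOfLinearIndependentOfCardEqFinrank ((linInd_iff x y).2 hxy) c
  let b₂ := basisOfLinearIndependentOfCardEqFinrank ((linInd_iff p q).2 hpq) c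
  have e₁ : (b₁ : Fin 2 → EucPlane) = ![x, y] := coe_basisOfLinearIndependentOfCardEqFinrank _ _
  have e₂ : (b₂ : Fin 2 → EucPlane) = ![p, q] := coe_basisOfLinearIndependentOfCardEqFinrank _ _
  rw [relIndex_real _ _ H b₁ b₂ (by rw [e₁]; simp [Set.pair_comm]) (by rw [e₂]; simp [Set.pair_comm])]
  have r : ∀ s t : ℝ, b₂.repr (s • p + t • q) = Finsupp.single 0 s + Finsupp.single 1 t := by
    intro s t
    have hp : p = b₂ 0 := by rw [e₂]; rfl
    have hq : q = b₂ 1 := by rw [e₂]; rfl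
    rw [hp, hq, map_add, map_smul, map_smul, b₂.repr_self, b₂.repr_self]; simp
  rw [Module.Basis.det_apply, Matrix.det_fin_two]
  simp only [Module.Basis.toMatrix_apply, e₁, Matrix.cons_val_zero, Matrix.cons_val_one]
  rw [hx, hy, r, r]
  simp
  congr 1; ring

/-- In a well-rounded planar group, two independent minimal vectors generate. -/
theorem wr_generate {Λ : AddSubgroup EucPlane} {x y : EucPlane} (hx : x ∈ Λ) (hy : y ∈ Λ)
    (hd : pdet x y ≠ 0) (hmx : ∀ z ∈ Λ, z ≠ 0 → ‖x‖ ≤ ‖z‖) (hmy : ∀ z ∈ Λ, z ≠ 0 → ‖y‖ ≤ ‖z‖) :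
    Λ = AddSubgroup.closure {x, y} := by
  have hx0 : x ≠ 0 := by rintro rfl; simp [pdet] at hd
  have hy0 : y ≠ 0 := by rintro rfl; simp [pdet] at hd
  have hn : ‖x‖ = ‖y‖ := le_antisymm (hmx y hy hy0) (hmy x hx hx0)
  have hp1 : 0 < ‖(1:ℝ) • x + (1:ℝ) • y‖ ^ 2 := by
    have : (1:ℝ) • x + (1:ℝ) • y ≠ 0 := fun h => by
      have := coord_unique hd (s := 1) (t := 1) (s' := 0) (t' := 0) (by rw [h]; simp)
      linarith [this.1]
    positivity
  have hp2 : 0 < ‖(1:ℝ) • x + (-1:ℝ) • y‖ ^ 2 := by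
    have : (1:ℝ) • x + (-1:ℝ) • y ≠ 0 := fun h => by
      have := coord_unique hd (s := 1) (t := -1) (s' := 0) (t' := 0) (by rw [h]; simp)
      linarith [this.1]
    positivity
  rw [normsq_comb, ← hn] at hp1 hp2
  apply le_antisymm
  · intro z hz
    obtain ⟨s, t, rfl⟩ := exists_coord hd z
    rw [mem_closure_pair_real]
    refine ⟨round s, round t, ?_⟩
    set s' := s - round s with hs'
    set t' := t - round t with ht'
    have bs : |s'| ≤ 1 / 2 := abs_sub_round s
    have bt : |t'| ≤ 1 / 2 := abs_sub_round t
    have hz' : s' • x + t' • y ∈ Λ := by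
      have : s' • x + t' • y = (s • x + t • y) - ((round s : ℝ) • x + (round t : ℝ) • y) := by
        rw [hs', ht', sub_smul, sub_smul]; abel
      rw [this]
      exact Λ.sub_mem hz (Λ.add_mem (zsmul_real_mem hx _) (zsmul_real_mem hy _))
    have hz0 : s' • x + t' • y = 0 := by
      by_contra hne
      have h1 := hmx _ hz' hne
      have h2 : ‖x‖ ^ 2 ≤ ‖s' • x + t' • y‖ ^ 2 := by gcongr
      rw [normsq_comb, ← hn] at h2
      have q1 : s' ^ 2 ≤ 1 / 4 := by nlinarith [sq_abs s', abs_nonneg s']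
      have q2 : t' ^ 2 ≤ 1 / 4 := by nlinarith [sq_abs t', abs_nonneg t']
      have q3 : |s' * t'| ≤ 1 / 4 := by
        rw [abs_mul]; nlinarith [abs_nonneg s', abs_nonneg t']
      have q4 : |⟪x, y⟫| < ‖x‖ ^ 2 := by
        rw [abs_lt]; constructor <;> linarith
      have q5 : s' * t' * ⟪x, y⟫ ≤ 1 / 4 * |⟪x, y⟫| := by
        refine (le_abs_self _).trans ?_
        rw [abs_mul]
        exact mul_le_mul_of_nonneg_right q3 (abs_nonneg _)
      nlinarith [sq_nonneg ‖x‖]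
    have := coord_unique hd (s := s') (t := t') (s' := 0) (t' := 0) (by rw [hz0]; simp)
    rw [show s = round s by linarith [this.1], show t = round t by linarith [this.2]]
    simp
  · rw [AddSubgroup.closure_le]
    rintro z (rfl | rfl)
    · exact hx
    · exact hy

/-- A lattice with a basis of equal length vectors with small inner product is well-rounded. -/
theorem wr_of_basis {x y : EucPlane} (hn : ‖x‖ ^ 2 = ‖y‖ ^ 2)
    (hc : 2 * |⟪x, y⟫| ≤ ‖x‖ ^ 2) :
    ∀ z ∈ AddSubgroup.closure ({x, y} : Set EucPlane), z ≠ 0 → ‖x‖ ≤ ‖z‖ := by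
  intro z hz hz0
  rw [mem_closure_pair_real] at hz
  obtain ⟨i, j, rfl⟩ := hz
  have hij : 1 ≤ i ^ 2 + j ^ 2 - |i * j| := by
    have hne : ¬ (i = 0 ∧ j = 0) := by
      rintro ⟨rfl, rfl⟩; simp at hz0
    rw [abs_mul, ← sq_abs i, ← sq_abs j]
    have : 0 < |i| ∨ 0 < |j| := by
      by_contra h; push Not at h
      exact hne ⟨abs_nonpos_iff.1 h.1, abs_nonpos_iff.1 h.2⟩
    have : 0 < |i| ^ 2 + |j| ^ 2 - |i| * |j| := by
      rcases this with h | h <;> nlinarith [sq_nonneg (|i| - |j|), abs_nonneg i, abs_nonneg j]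
    omega
  have hij' : (1:ℝ) ≤ (i:ℝ) ^ 2 + (j:ℝ) ^ 2 - |(i:ℝ) * j| := by exact_mod_cast hij
  have h2 : ‖x‖ ^ 2 ≤ ‖(i:ℝ) • x + (j:ℝ) • y‖ ^ 2 := by
    rw [normsq_comb, ← hn]
    have q : -(|(i:ℝ) * j| * |⟪x, y⟫|) ≤ (i:ℝ) * j * ⟪x, y⟫ := by
      rw [← abs_mul]; exact neg_abs_le _
    nlinarith [abs_nonneg ((i:ℝ) * j), sq_nonneg ‖x‖]
  exact (pow_le_pow_iff_left₀ (norm_nonneg _) (norm_nonneg _) two_ne_zero).1 h2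

theorem reflection_form (R : EucPlane ≃ₗᵢ[ℝ] EucPlane)
    (hdet : LinearMap.det (R.toLinearEquiv : EucPlane →ₗ[ℝ] EucPlane) = -1) :
    ∃ a b : ℝ, a ^ 2 + b ^ 2 = 1 ∧ ∀ z : EucPlane,
      (R z) 0 = a * z 0 + b * z 1 ∧ (R z) 1 = b * z 0 - a * z 1 := by
  let B := (EuclideanSpace.basisFun (Fin 2) ℝ).toBasis
  let e0 : EucPlane := EuclideanSpace.single 0 1
  let e1 : EucPlane := EuclideanSpace.single 1 1
  have hz : ∀ z : EucPlane, z = z 0 • e0 + z 1 • e1 := by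
    intro z; apply plane_ext <;> simp [e0, e1]
  have hRz : ∀ z : EucPlane, R z = z 0 • R e0 + z 1 • R e1 := by
    intro z; conv_lhs => rw [hz z]
    simp
  have h00 : ⟪R e0, R e0⟫ = 1 := by rw [R.inner_map_map, plane_inner]; simp [e0]
  have h11 : ⟪R e1, R e1⟫ = 1 := by rw [R.inner_map_map, plane_inner]; simp [e1]
  rw [plane_inner] at h00 h11
  have hD : (R e0) 0 * (R e1) 1 - (R e1) 0 * (R e0) 1 = -1 := by
    rw [← hdet, ← LinearMap.det_toMatrix B, Matrix.det_fin_two]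
    simp only [LinearMap.toMatrix_apply]
    simp [B, e0, e1]
  have hsq : ((R e1) 0 - (R e0) 1) ^ 2 + ((R e1) 1 + (R e0) 0) ^ 2 = 0 := by
    linear_combination h00 + h11 + 2 * hD
  have k1 : (R e1) 0 = (R e0) 1 := by nlinarith [sq_nonneg ((R e1) 0 - (R e0) 1), sq_nonneg ((R e1) 1 + (R e0) 0)]
  have k2 : (R e1) 1 = -(R e0) 0 := by nlinarith [sq_nonneg ((R e1) 0 - (R e0) 1), sq_nonneg ((R e1) 1 + (R e0) 0)]
  refine ⟨(R e0) 0, (R e0) 1, by linarith, fun z => ?_⟩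
  rw [hRz z]
  constructor
  · simp [k1]; ring
  · simp [k2]; ring

theorem reflection_invol (R : EucPlane ≃ₗᵢ[ℝ] EucPlane)
    (hdet : LinearMap.det (R.toLinearEquiv : EucPlane →ₗ[ℝ] EucPlane) = -1) (z : EucPlane) :
    R (R z) = z := by
  obtain ⟨a, b, hab, h⟩ := reflection_form R hdet
  apply plane_ext
  · rw [(h _).1, (h z).1, (h z).2]; linear_combination z 0 * hab
  · rw [(h _).2, (h z).1, (h z).2]; linear_combination z 1 * hab

theorem exists_primitive {Γ : AddSubgroup EucPlane} (hΓ : IsPlanarLattice Γ) {u₀ : EucPlane}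
    (hu : u₀ ∈ Γ) (hu0 : u₀ ≠ 0) :
    ∃ u ∈ Γ, u ≠ 0 ∧ (∃ c : ℝ, u = c • u₀) ∧ ∀ t : ℝ, t • u ∈ Γ → ∃ k : ℤ, t = k := by
  obtain ⟨v₁, v₂, hli, rfl⟩ := hΓ
  rw [linInd_iff] at hli
  obtain ⟨m, n, rfl⟩ := mem_closure_pair_real.1 hu
  have hmn : ¬ (m = 0 ∧ n = 0) := by rintro ⟨rfl, rfl⟩; simp at hu0
  have hg : (Int.gcd m n : ℤ) ≠ 0 := by
    intro h; apply hmn; exact Int.gcd_eq_zero_iff.1 (by exact_mod_cast h)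
  obtain ⟨m', hm'⟩ := Int.gcd_dvd_left m n
  obtain ⟨n', hn'⟩ := Int.gcd_dvd_right m n
  set g : ℤ := (Int.gcd m n : ℤ) with hgdef
  have hbez := Int.gcd_eq_gcd_ab m n
  set p := Int.gcdA m n
  set q := Int.gcdB m n
  have hb : m' * p + n' * q = 1 := by
    apply mul_left_cancel₀ hg
    calc g * (m' * p + n' * q) = (g * m') * p + (g * n') * q := by ring
      _ = g * 1 := by rw [← hm', ← hn', mul_one, hgdef, hbez]
  have hgR : (g : ℝ) ≠ 0 := by exact_mod_cast hg
  have hmR : (m : ℝ) = g * m' := by exact_mod_cast hm'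
  have hnR : (n : ℝ) = g * n' := by exact_mod_cast hn'
  have hbR : (m' : ℝ) * p + n' * q = 1 := by exact_mod_cast hb
  have hcu : (m' : ℝ) • v₁ + (n' : ℝ) • v₂ = (g : ℝ)⁻¹ • ((m : ℝ) • v₁ + (n : ℝ) • v₂) := by
    rw [smul_add, smul_smul, smul_smul, hmR, hnR, inv_mul_cancel_left₀ hgR, inv_mul_cancel_left₀ hgR]
  refine ⟨(m' : ℝ) • v₁ + (n' : ℝ) • v₂, mem_closure_pair_real.2 ⟨m', n', rfl⟩, ?_, ⟨(g:ℝ)⁻¹, hcu⟩, ?_⟩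
  · rw [hcu]; exact smul_ne_zero (inv_ne_zero hgR) hu0
  · intro t ht
    obtain ⟨i, j, hij⟩ := mem_closure_pair_real.1 ht
    rw [smul_add, smul_smul, smul_smul] at hij
    obtain ⟨h1, h2⟩ := coord_unique hli hij
    refine ⟨i * p + j * q, ?_⟩
    push_cast
    rw [← h1, ← h2]
    linear_combination -t * hbR

theorem mem_latticeMap {Γ : AddSubgroup EucPlane} {R : EucPlane ≃ₗᵢ[ℝ] EucPlane}
    (hinv : ∀ z, R (R z) = z) {z : EucPlane} : z ∈ latticeMap R Γ ↔ R z ∈ Γ := by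
  rw [latticeMap, AddSubgroup.mem_map]
  constructor
  · rintro ⟨y, hy, rfl⟩
    have : R (R y) ∈ Γ := by rw [hinv]; exact hy
    exact this
  · intro h
    exact ⟨R z, h, hinv z⟩

/-- The data extracted from the lattice and the reflection. -/
structure AxesData (Γ : AddSubgroup EucPlane) (R : EucPlane ≃ₗᵢ[ℝ] EucPlane) (u w : EucPlane) : Prop where
  hu : u ∈ Γ
  hw : w ∈ Γ
  hu0 : u ≠ 0
  hw0 : w ≠ 0
  hRu : R u = u
  hRw : R w = -w
  pu : ∀ t : ℝ, t • u ∈ Γ → ∃ k : ℤ, t = k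
  pw : ∀ t : ℝ, t • w ∈ Γ → ∃ k : ℤ, t = k
  inv : ∀ z, R (R z) = z
  idx : ∃ N : ℕ, N ≠ 0 ∧ ∀ z ∈ Γ, (N : ℝ) • z ∈ Γ ⊓ latticeMap R Γ

theorem exists_axes {Γ : AddSubgroup EucPlane} (hΓ : IsPlanarLattice Γ)
    {R : EucPlane ≃ₗᵢ[ℝ] EucPlane} (hR : IsCoincidenceReflection Γ R) :
    ∃ u w, AxesData Γ R u w := by
  obtain ⟨hdet, hidx⟩ := hR
  have hinv := reflection_invol R hdet
  set N := ((Γ ⊓ latticeMap R Γ).addSubgroupOf Γ).index with hN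
  have hmul : ∀ z ∈ Γ, (N : ℝ) • z ∈ Γ ⊓ latticeMap R Γ := by
    intro z hz
    have := AddSubgroup.nsmul_index_mem ((Γ ⊓ latticeMap R Γ).addSubgroupOf Γ) ⟨z, hz⟩
    rw [AddSubgroup.mem_addSubgroupOf] at this
    rw [Nat.cast_smul_eq_nsmul]
    exact this
  have hNR : (N : ℝ) ≠ 0 := by exact_mod_cast hidx
  obtain ⟨a, b, hab, hform⟩ := reflection_form R hdet
  have hRmem : ∀ z ∈ Γ, R ((N : ℝ) • z) ∈ Γ := fun z hz => (mem_latticeMap hinv).1 (hmul z hz).2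
  obtain ⟨v₁, v₂, hli, hcl⟩ := id hΓ
  rw [linInd_iff] at hli
  have hv₁ : v₁ ∈ Γ := by rw [hcl]; exact AddSubgroup.subset_closure (by simp)
  have hv₂ : v₂ ∈ Γ := by rw [hcl]; exact AddSubgroup.subset_closure (by simp)
  have hsign : ∀ ε : ℝ, ε ^ 2 = 1 → ∃ z ∈ Γ, R z ≠ ε • z := by
    intro ε hε
    by_contra hcon
    push Not at hcon
    have h1 := hcon v₁ hv₁
    have h2 := hcon v₂ hv₂
    have f1 := hform v₁
    have f2 := hform v₂
    rw [h1] at f1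
    rw [h2] at f2
    simp only [PiLp.smul_apply, smul_eq_mul] at f1 f2
    have c1 : (ε - a) * pdet v₁ v₂ = 0 := by
      rw [pdet]; linear_combination v₂ 1 * f1.1 - v₁ 1 * f2.1
    have c2 : (ε + a) * pdet v₁ v₂ = 0 := by
      rw [pdet]; linear_combination v₁ 0 * f2.2 - v₂ 0 * f1.2
    have d1 := (mul_eq_zero.1 c1).resolve_right hli
    have d2 := (mul_eq_zero.1 c2).resolve_right hli
    have : ε = 0 := by linarith
    rw [this] at hε; norm_num at hε
  have hplus : ∃ u₀ ∈ Γ, u₀ ≠ 0 ∧ R u₀ = u₀ := by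
    obtain ⟨z, hz, hne⟩ := hsign (-1) (by norm_num)
    refine ⟨(N : ℝ) • z + R ((N : ℝ) • z), Γ.add_mem (hmul z hz).1 (hRmem z hz), ?_, ?_⟩
    · rw [map_smul, ← smul_add]
      refine smul_ne_zero hNR fun h => hne ?_
      rw [neg_one_smul]; exact (neg_eq_of_add_eq_zero_right h).symm
    · rw [map_add, hinv, add_comm]
  have hminus : ∃ w₀ ∈ Γ, w₀ ≠ 0 ∧ R w₀ = -w₀ := by
    obtain ⟨z, hz, hne⟩ := hsign 1 (by norm_num)
    refine ⟨(N : ℝ) • z - R ((N : ℝ) • z), Γ.sub_mem (hmul z hz).1 (hRmem z hz), ?_, ?_⟩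
    · rw [map_smul, ← smul_sub]
      refine smul_ne_zero hNR fun h => hne ?_
      rw [one_smul]; exact (sub_eq_zero.1 h).symm
    · rw [map_sub, hinv, neg_sub]
  obtain ⟨u₀, hu₀, hu₀0, hRu₀⟩ := hplus
  obtain ⟨w₀, hw₀, hw₀0, hRw₀⟩ := hminus
  obtain ⟨u, hu, hu0, ⟨c, hc⟩, pu⟩ := exists_primitive hΓ hu₀ hu₀0
  obtain ⟨w, hw, hw0, ⟨c', hc'⟩, pw⟩ := exists_primitive hΓ hw₀ hw₀0
  exact ⟨u, w, ⟨hu, hw, hu0, hw0, by rw [hc, map_smul, hRu₀], by rw [hc', map_smul, hRw₀, smul_neg],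
    pu, pw, hinv, N, hidx, hmul⟩⟩

/-- The vector `(k u + l w) / 2`. -/
def hv (u w : EucPlane) (k l : ℝ) : EucPlane := (k / 2) • u + (l / 2) • w

/-- The rhombic lattice spanned by `(k u + l w) / 2` and `(k u - l w) / 2`. -/
def rhomb (u w : EucPlane) (k l : ℝ) : AddSubgroup EucPlane :=
  AddSubgroup.closure {hv u w k l, hv u w k (-l)}

section axes
variable {Γ : AddSubgroup EucPlane} {R : EucPlane ≃ₗᵢ[ℝ] EucPlane} {u w : EucPlane}

theorem AxesData.inner_zero (h : AxesData Γ R u w) : ⟪u, w⟫ = 0 := by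
  have := R.inner_map_map u w
  rw [h.hRu, h.hRw, inner_neg_right] at this
  linarith

theorem AxesData.a_pos (h : AxesData Γ R u w) : 0 < ‖u‖ ^ 2 := by
  have := h.hu0; positivity

theorem AxesData.b_pos (h : AxesData Γ R u w) : 0 < ‖w‖ ^ 2 := by
  have := h.hw0; positivity

theorem AxesData.pdet_ne (h : AxesData Γ R u w) : pdet u w ≠ 0 := by
  have h1 := h.inner_zero
  have h2 := mul_pos h.a_pos h.b_pos
  rw [← real_inner_self_eq_norm_sq, ← real_inner_self_eq_norm_sq, plane_inner, plane_inner] at h2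
  rw [plane_inner] at h1
  intro h0
  rw [pdet] at h0
  have : (u 0 * u 0 + u 1 * u 1) * (w 0 * w 0 + w 1 * w 1) =
    (u 0 * w 0 + u 1 * w 1) ^ 2 + (u 0 * w 1 - u 1 * w 0) ^ 2 := by ring
  rw [this, h1, h0] at h2
  norm_num at h2

theorem AxesData.normsq (h : AxesData Γ R u w) (s t : ℝ) :
    ‖s • u + t • w‖ ^ 2 = s ^ 2 * ‖u‖ ^ 2 + t ^ 2 * ‖w‖ ^ 2 := by
  rw [normsq_comb, h.inner_zero]; ring

theorem AxesData.normsq_hv (h : AxesData Γ R u w) (k l : ℝ) :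
    ‖hv u w k l‖ ^ 2 = (k ^ 2 * ‖u‖ ^ 2 + l ^ 2 * ‖w‖ ^ 2) / 4 := by
  rw [hv, h.normsq]; ring

theorem AxesData.inner_hv (h : AxesData Γ R u w) (k l : ℝ) :
    ⟪hv u w k l, hv u w k (-l)⟫ = (k ^ 2 * ‖u‖ ^ 2 - l ^ 2 * ‖w‖ ^ 2) / 4 := by
  have h0 := h.inner_zero
  rw [plane_inner] at h0
  simp only [hv, ← real_inner_self_eq_norm_sq, plane_inner]
  simp
  ring

theorem pdet_hv (k l : ℝ) : pdet (hv u w k l) (hv u w k (-l)) = -(k * l / 2) * pdet u w := by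
  simp only [hv, pdet]; simp; ring

theorem AxesData.mem_inter_iff (h : AxesData Γ R u w) {z : EucPlane} :
    z ∈ Γ ⊓ latticeMap R Γ ↔ z ∈ Γ ∧ ∃ k l : ℤ, z = hv u w k l := by
  rw [AddSubgroup.mem_inf, mem_latticeMap h.inv]
  refine and_congr_right fun hz => ?_
  constructor
  · intro hRz
    obtain ⟨s, t, rfl⟩ := exists_coord h.pdet_ne z
    rw [map_add, map_smul, map_smul, h.hRu, h.hRw] at hRz
    obtain ⟨k, hk⟩ := h.pu (2 * s) (by
      convert Γ.add_mem hz hRz using 1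
      module)
    obtain ⟨l, hl⟩ := h.pw (2 * t) (by
      convert Γ.sub_mem hz hRz using 1
      module)
    refine ⟨k, l, ?_⟩
    rw [hv, ← hk, ← hl]; congr 2 <;> ring
  · rintro ⟨k, l, rfl⟩
    have : R (hv u w k l) = (k : ℝ) • u - hv u w k l := by
      rw [hv, map_add, map_smul, map_smul, h.hRu, h.hRw]; module
    rw [this]
    exact Γ.sub_mem (zsmul_real_mem h.hu k) hz

theorem AxesData.rat_coord (h : AxesData Γ R u w) {z : EucPlane} (hz : z ∈ Γ) :
    ∃ s t : ℚ, z = (s : ℝ) • u + (t : ℝ) • w := by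
  obtain ⟨N, hN, hmul⟩ := h.idx
  obtain ⟨-, k, l, hkl⟩ := h.mem_inter_iff.1 (hmul z hz)
  have hNR : (N : ℝ) ≠ 0 := by exact_mod_cast hN
  refine ⟨k / (2 * N), l / (2 * N), ?_⟩
  have : z = (N : ℝ)⁻¹ • ((N : ℝ) • z) := by rw [smul_smul, inv_mul_cancel₀ hNR, one_smul]
  rw [this, hkl, hv, smul_add, smul_smul, smul_smul]
  push_cast
  congr 2 <;> field_simp

theorem AxesData.irr (h : AxesData Γ R u w) (hirr : ¬ IsRationalLattice Γ) {p q : ℚ}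
    (hpq : (p : ℝ) * ‖u‖ ^ 2 + q * ‖w‖ ^ 2 = 0) : p = 0 ∧ q = 0 := by
  have hb := h.b_pos
  have hp : p = 0 := by
    by_contra hp
    apply hirr
    have hpR : (p : ℝ) ≠ 0 := by exact_mod_cast hp
    refine ⟨(‖w‖ ^ 2)⁻¹, by positivity, fun v hv v' hv' => ?_⟩
    obtain ⟨s, t, rfl⟩ := h.rat_coord hv
    obtain ⟨s', t', rfl⟩ := h.rat_coord hv'
    refine ⟨s * s' * (-q / p) + t * t', ?_⟩
    have h0 := h.inner_zero
    have hin : ⟪(s : ℝ) • u + (t : ℝ) • w, (s' : ℝ) • u + (t' : ℝ) • w⟫ =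
        s * s' * ‖u‖ ^ 2 + t * t' * ‖w‖ ^ 2 := by
      simp only [inner_add_left, inner_add_right, real_inner_smul_left, real_inner_smul_right, h0,
        real_inner_comm u w, real_inner_self_eq_norm_sq]
      ring
    rw [hin]
    have : ‖u‖ ^ 2 = (-q / p) * ‖w‖ ^ 2 := by
      field_simp; linear_combination hpq
    rw [this]
    push_cast
    have hwn : ‖w‖ ≠ 0 := norm_ne_zero_iff.2 h.hw0
    field_simp
  refine ⟨hp, ?_⟩
  rw [hp] at hpq
  simp only [Rat.cast_zero, zero_mul, zero_add] at hpq
  exact_mod_cast (mul_eq_zero.1 hpq).resolve_right hb.ne'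

theorem AxesData.forward (h : AxesData Γ R u w) (hirr : ¬ IsRationalLattice Γ)
    {Λ : AddSubgroup EucPlane} (hΛ : Λ ≤ Γ) (hwr : IsWellRounded Λ) :
    ∃ k l : ℕ, 1 ≤ k ∧ 1 ≤ l ∧ hv u w k l ∈ Γ ∧ (l : ℝ) ^ 2 * ‖w‖ ^ 2 ≤ 3 * (k ^ 2 * ‖u‖ ^ 2) ∧
      (k : ℝ) ^ 2 * ‖u‖ ^ 2 ≤ 3 * (l ^ 2 * ‖w‖ ^ 2) ∧ Λ = rhomb u w k l := by
  obtain ⟨x, y, hx, hy, hli, hmx, hmy⟩ := hwr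
  rw [linInd_iff] at hli
  have hx0 : x ≠ 0 := by rintro rfl; simp [pdet] at hli
  have hy0 : y ≠ 0 := by rintro rfl; simp [pdet] at hli
  have hn : ‖x‖ = ‖y‖ := le_antisymm (hmx y hy hy0) (hmy x hx hx0)
  obtain ⟨s, t, hxst⟩ := h.rat_coord (hΛ hx)
  obtain ⟨s', t', hyst⟩ := h.rat_coord (hΛ hy)
  have hsq : ‖x‖ ^ 2 = ‖y‖ ^ 2 := by rw [hn]
  rw [hxst, hyst, h.normsq, h.normsq] at hsq
  obtain ⟨e1, e2⟩ := h.irr hirr (p := s ^ 2 - s' ^ 2) (q := t ^ 2 - t' ^ 2) (by push_cast; linarith)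
  have f1 : s = s' ∨ s = -s' := sq_eq_sq_iff_eq_or_eq_neg.1 (by linarith)
  have f2 : t = t' ∨ t = -t' := sq_eq_sq_iff_eq_or_eq_neg.1 (by linarith)
  have hdet : pdet x y = ((s : ℝ) * t' - t * s') * pdet u w := by
    rw [hxst, hyst]; simp only [pdet]; simp; ring
  have hdet' : (s : ℝ) * t' - t * s' ≠ 0 := by
    intro h0; rw [h0, zero_mul] at hdet; exact hli hdet
  have hdetQ : s * t' - t * s' ≠ 0 := by exact_mod_cast hdet'
  have hs0 : s ≠ 0 := by
    rintro rfl
    have : s' = 0 := by rcases f1 with h | h <;> linarith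
    rw [this] at hdetQ; simp at hdetQ
  have ht0 : t ≠ 0 := by
    rintro rfl
    have : t' = 0 := by rcases f2 with h | h <;> linarith
    rw [this] at hdetQ; simp at hdetQ
  -- all sign choices lie in `Λ`
  have hA : (s : ℝ) • u + (t : ℝ) • w ∈ Λ := by rw [← hxst]; exact hx
  have hB : (s : ℝ) • u + (-t : ℝ) • w ∈ Λ := by
    rcases f1 with f1 | f1 <;> rcases f2 with f2 | f2
    · exfalso; apply hdetQ; rw [f1, f2]; ring
    · rw [f1, f2]; push_cast; rw [neg_neg, ← hyst]; exact hy
    · have : (s : ℝ) • u + (-t : ℝ) • w = -y := by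
        rw [hyst, f1, f2]; push_cast; module
      rw [this]; exact Λ.neg_mem hy
    · exfalso; apply hdetQ; rw [f1, f2]; ring
  have hC : ((|s| : ℚ) : ℝ) • u + ((|t| : ℚ) : ℝ) • w ∈ Λ ∧
      ((|s| : ℚ) : ℝ) • u + (-(|t| : ℚ) : ℝ) • w ∈ Λ := by
    rcases abs_choice s with c1 | c1 <;> rcases abs_choice t with c2 | c2 <;> rw [c1, c2] <;> push_cast
    · exact ⟨hA, hB⟩
    · rw [neg_neg]; exact ⟨hB, hA⟩
    · constructor
      · convert Λ.neg_mem hB using 1; module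
      · convert Λ.neg_mem hA using 1; module
    · constructor
      · convert Λ.neg_mem hA using 1; module
      · convert Λ.neg_mem hB using 1; module
  set S : ℝ := ((|s| : ℚ) : ℝ) with hS
  set T : ℝ := ((|t| : ℚ) : ℝ) with hT
  have hS0 : 0 < S := by rw [hS]; exact_mod_cast abs_pos.2 hs0
  have hT0 : 0 < T := by rw [hT]; exact_mod_cast abs_pos.2 ht0
  have hS2 : S ^ 2 = (s : ℝ) ^ 2 := by rw [hS]; exact_mod_cast sq_abs s
  have hT2 : T ^ 2 = (t : ℝ) ^ 2 := by rw [hT]; exact_mod_cast sq_abs t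
  obtain ⟨k, hk⟩ := h.pu (2 * S) (by
    convert Γ.add_mem (hΛ hC.1) (hΛ hC.2) using 1; module)
  obtain ⟨l, hl⟩ := h.pw (2 * T) (by
    convert Γ.sub_mem (hΛ hC.1) (hΛ hC.2) using 1; module)
  have hk0 : 0 < k := by
    have : (0:ℝ) < k := by linarith
    exact_mod_cast this
  have hl0 : 0 < l := by
    have : (0:ℝ) < l := by linarith
    exact_mod_cast this
  lift k to ℕ using hk0.le
  lift l to ℕ using hl0.le
  rw [Int.cast_natCast] at hk hl
  have v1 : hv u w k l = S • u + T • w := by rw [hv, ← hk, ← hl]; congr 2 <;> ring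
  have v2 : hv u w k (-l) = S • u + (-T) • w := by rw [hv, ← hk, ← hl]; congr 2 <;> ring
  have n1 : ‖hv u w k l‖ = ‖x‖ := by
    rw [← sq_eq_sq₀ (norm_nonneg _) (norm_nonneg _), v1, hxst, h.normsq, h.normsq, hS2, hT2]
  have n2 : ‖hv u w k (-l)‖ = ‖x‖ := by
    rw [← sq_eq_sq₀ (norm_nonneg _) (norm_nonneg _), v2, hxst, h.normsq, h.normsq, neg_sq, hS2, hT2]
  rw [← v1, ← v2] at hC
  have hk0' : (0:ℝ) < k := by exact_mod_cast hk0
  have hl0' : (0:ℝ) < l := by exact_mod_cast hl0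
  have m1 : ‖hv u w k l‖ ^ 2 ≤ ‖(k : ℝ) • u + (0:ℝ) • w‖ ^ 2 := by
    rw [n1]
    have : ‖x‖ ≤ ‖(k : ℝ) • u + (0:ℝ) • w‖ := by
      refine hmx _ ?_ ?_
      · convert Λ.add_mem hC.1 hC.2 using 1; simp only [hv]; module
      · rw [zero_smul, add_zero]; exact smul_ne_zero hk0'.ne' h.hu0
    gcongr
  have m2 : ‖hv u w k l‖ ^ 2 ≤ ‖(0:ℝ) • u + (l : ℝ) • w‖ ^ 2 := by
    rw [n1]
    have : ‖x‖ ≤ ‖(0:ℝ) • u + (l : ℝ) • w‖ := by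
      refine hmx _ ?_ ?_
      · convert Λ.sub_mem hC.1 hC.2 using 1; simp only [hv]; module
      · rw [zero_smul, zero_add]; exact smul_ne_zero hl0'.ne' h.hw0
    gcongr
  rw [h.normsq_hv, h.normsq] at m1 m2
  refine ⟨k, l, by exact_mod_cast hk0, by exact_mod_cast hl0, hΛ hC.1, by linarith, by linarith, ?_⟩
  refine wr_generate hC.1 hC.2 ?_ (by rw [n1]; exact hmx) (by rw [n2]; exact hmx)
  rw [pdet_hv]
  have := h.pdet_ne
  have : (k * l / 2 : ℝ) ≠ 0 := by positivity
  exact mul_ne_zero (neg_ne_zero.2 this) h.pdet_ne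

theorem hv_neg (k l : ℝ) : hv u w k (-l) = k • u - hv u w k l := by
  simp only [hv]; module

theorem AxesData.rhomb_le (h : AxesData Γ R u w) {k l : ℕ} (hm : hv u w k l ∈ Γ) :
    rhomb u w k l ≤ Γ := by
  rw [rhomb, AddSubgroup.closure_le]
  rintro z (rfl | rfl)
  · exact hm
  · rw [SetLike.mem_coe, hv_neg]
    exact Γ.sub_mem (by simpa using zsmul_real_mem h.hu (k : ℤ)) hm

theorem AxesData.rhomb_min (h : AxesData Γ R u w) {k l : ℕ}
    (h1 : (l : ℝ) ^ 2 * ‖w‖ ^ 2 ≤ 3 * (k ^ 2 * ‖u‖ ^ 2))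
    (h2 : (k : ℝ) ^ 2 * ‖u‖ ^ 2 ≤ 3 * (l ^ 2 * ‖w‖ ^ 2)) :
    ∀ z ∈ rhomb u w k l, z ≠ 0 → ‖hv u w k l‖ ≤ ‖z‖ := by
  refine wr_of_basis ?_ ?_
  · rw [h.normsq_hv, h.normsq_hv, neg_sq]
  · rw [h.inner_hv, h.normsq_hv]
    have : |((k : ℝ) ^ 2 * ‖u‖ ^ 2 - l ^ 2 * ‖w‖ ^ 2) / 4| ≤
      (k ^ 2 * ‖u‖ ^ 2 + l ^ 2 * ‖w‖ ^ 2) / 8 := by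
      rw [abs_le]; constructor <;> linarith
    linarith

theorem AxesData.rhomb_wr (h : AxesData Γ R u w) {k l : ℕ} (hk : 1 ≤ k) (hl : 1 ≤ l)
    (h1 : (l : ℝ) ^ 2 * ‖w‖ ^ 2 ≤ 3 * (k ^ 2 * ‖u‖ ^ 2))
    (h2 : (k : ℝ) ^ 2 * ‖u‖ ^ 2 ≤ 3 * (l ^ 2 * ‖w‖ ^ 2)) : IsWellRounded (rhomb u w k l) := by
  have hk0' : (0:ℝ) < k := by exact_mod_cast hk
  have hl0' : (0:ℝ) < l := by exact_mod_cast hl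
  have hn : ‖hv u w k (-l)‖ = ‖hv u w k l‖ := by
    rw [← sq_eq_sq₀ (norm_nonneg _) (norm_nonneg _), h.normsq_hv, h.normsq_hv, neg_sq]
  refine ⟨hv u w k l, hv u w k (-l), AddSubgroup.subset_closure (by simp),
    AddSubgroup.subset_closure (by simp), ?_, h.rhomb_min h1 h2, by rw [hn]; exact h.rhomb_min h1 h2⟩
  rw [linInd_iff, pdet_hv]
  have : (k * l / 2 : ℝ) ≠ 0 := by positivity
  exact mul_ne_zero (neg_ne_zero.2 this) h.pdet_ne

theorem AxesData.hv_ne (h : AxesData Γ R u w) {k l : ℕ} (hk : 1 ≤ k) : hv u w k l ≠ 0 := by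
  intro h0
  have := coord_unique h.pdet_ne (s := k / 2) (t := l / 2) (s' := 0) (t' := 0) (by
    rw [hv] at h0; rw [h0]; simp)
  have hk0' : (0:ℝ) < k := by exact_mod_cast hk
  linarith [this.1]

theorem AxesData.rhomb_inj (h : AxesData Γ R u w) (hirr : ¬ IsRationalLattice Γ) {k l k' l' : ℕ}
    (hk : 1 ≤ k) (hk' : 1 ≤ k')
    (h1 : (l : ℝ) ^ 2 * ‖w‖ ^ 2 ≤ 3 * (k ^ 2 * ‖u‖ ^ 2))
    (h2 : (k : ℝ) ^ 2 * ‖u‖ ^ 2 ≤ 3 * (l ^ 2 * ‖w‖ ^ 2))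
    (h1' : (l' : ℝ) ^ 2 * ‖w‖ ^ 2 ≤ 3 * (k' ^ 2 * ‖u‖ ^ 2))
    (h2' : (k' : ℝ) ^ 2 * ‖u‖ ^ 2 ≤ 3 * (l' ^ 2 * ‖w‖ ^ 2))
    (he : rhomb u w k l = rhomb u w k' l') : k = k' ∧ l = l' := by
  have a1 := h.rhomb_min h1 h2 (hv u w k' l')
    (by rw [he]; exact AddSubgroup.subset_closure (by simp)) (h.hv_ne hk')
  have a2 := h.rhomb_min h1' h2' (hv u w k l)
    (by rw [← he]; exact AddSubgroup.subset_closure (by simp)) (h.hv_ne hk)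
  have a3 : ‖hv u w k l‖ ^ 2 = ‖hv u w k' l'‖ ^ 2 := by rw [le_antisymm a1 a2]
  rw [h.normsq_hv, h.normsq_hv] at a3
  obtain ⟨e1, e2⟩ := h.irr hirr (p := (k : ℚ) ^ 2 - (k' : ℚ) ^ 2) (q := (l : ℚ) ^ 2 - (l' : ℚ) ^ 2)
    (by push_cast; linarith)
  constructor
  · have : (k : ℚ) = k' := by
      rw [← sq_eq_sq₀ (by positivity) (by positivity)]; linarith
    exact_mod_cast this
  · have : (l : ℚ) = l' := by
      rw [← sq_eq_sq₀ (by positivity) (by positivity)]; linarith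
    exact_mod_cast this

theorem AxesData.count_eq (h : AxesData Γ R u w) (hirr : ¬ IsRationalLattice Γ) (n : ℕ) :
    countWR Γ n = Nat.card {p : ℕ × ℕ // 1 ≤ p.1 ∧ 1 ≤ p.2 ∧ hv u w p.1 p.2 ∈ Γ ∧
      (p.2 : ℝ) ^ 2 * ‖w‖ ^ 2 ≤ 3 * (p.1 ^ 2 * ‖u‖ ^ 2) ∧
      (p.1 : ℝ) ^ 2 * ‖u‖ ^ 2 ≤ 3 * (p.2 ^ 2 * ‖w‖ ^ 2) ∧ (rhomb u w p.1 p.2).relIndex Γ = n} := by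
  symm
  refine Nat.card_eq_of_bijective (fun p => ⟨rhomb u w p.1.1 p.1.2, ?_, ?_, ?_⟩) ⟨?_, ?_⟩
  · exact h.rhomb_le p.2.2.2.1
  · exact h.rhomb_wr p.2.1 p.2.2.1 p.2.2.2.2.1 p.2.2.2.2.2.1
  · exact p.2.2.2.2.2.2
  · rintro ⟨⟨k, l⟩, a1, a2, a3, a4, a5, a6⟩ ⟨⟨k', l'⟩, b1, b2, b3, b4, b5, b6⟩ heq
    have := h.rhomb_inj hirr a1 b1 a4 a5 b4 b5 (Subtype.ext_iff.1 heq)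
    obtain ⟨rfl, rfl⟩ := this
    rfl
  · rintro ⟨Λ, c1, c2, c3⟩
    obtain ⟨k, l, a1, a2, a3, a4, a5, rfl⟩ := h.forward hirr c1 c2
    exact ⟨⟨(k, l), a1, a2, a3, a4, a5, c3⟩, rfl⟩

end axes

section index
variable {Γ : AddSubgroup EucPlane} {R : EucPlane ≃ₗᵢ[ℝ] EucPlane} {u w : EucPlane}

theorem AxesData.hv_red (h : AxesData Γ R u w) (i j : ℤ) (r s : ℝ) :
    hv u w (2 * i + r) (2 * j + s) ∈ Γ ↔ hv u w r s ∈ Γ := by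
  have e : hv u w (2 * i + r) (2 * j + s) = ((i : ℝ) • u + (j : ℝ) • w) + hv u w r s := by
    simp only [hv]; module
  rw [e]
  exact Γ.add_mem_cancel_left (Γ.add_mem (zsmul_real_mem h.hu i) (zsmul_real_mem h.hw j))

theorem half_ne_int (k : ℤ) : (1 / 2 : ℝ) ≠ k := by
  intro h
  have h2 : ((2 * k : ℤ) : ℝ) = ((1 : ℤ) : ℝ) := by push_cast; linarith
  have h3 : 2 * k = 1 := by exact_mod_cast h2
  omega

theorem AxesData.hv_one_zero (h : AxesData Γ R u w) : hv u w 1 0 ∉ Γ := by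
  intro hm
  obtain ⟨k, hk⟩ := h.pu (1 / 2) (by simpa [hv] using hm)
  exact half_ne_int k hk

theorem AxesData.hv_zero_one (h : AxesData Γ R u w) : hv u w 0 1 ∉ Γ := by
  intro hm
  obtain ⟨k, hk⟩ := h.pw (1 / 2) (by simpa [hv] using hm)
  exact half_ne_int k hk

/-- Membership of half-integral combinations. -/
theorem AxesData.hv_mem (h : AxesData Γ R u w) {k l : ℤ} (hm : hv u w k l ∈ Γ) :
    (∃ i j : ℤ, k = 2 * i ∧ l = 2 * j) ∨
      (hv u w 1 1 ∈ Γ ∧ ∃ i j : ℤ, k = 2 * i + 1 ∧ l = 2 * j + 1) := by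
  obtain ⟨i, hi | hi⟩ := Int.even_or_odd' k <;> obtain ⟨j, hj | hj⟩ := Int.even_or_odd' l
  · exact Or.inl ⟨i, j, hi, hj⟩
  · have := (h.hv_red i j 0 1).1 (by rw [hi, hj] at hm; push_cast at hm; simpa using hm)
    exact absurd this h.hv_zero_one
  · have := (h.hv_red i j 1 0).1 (by rw [hi, hj] at hm; push_cast at hm; simpa using hm)
    exact absurd this h.hv_one_zero
  · have := (h.hv_red i j 1 1).1 (by rw [hi, hj] at hm; push_cast at hm; simpa using hm)
    exact Or.inr ⟨this, i, j, hi, hj⟩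

theorem AxesData.rhomb_le_inter (h : AxesData Γ R u w) {k l : ℕ} (hm : hv u w k l ∈ Γ) :
    rhomb u w k l ≤ Γ ⊓ latticeMap R Γ := by
  have hle := h.rhomb_le hm
  rw [rhomb, AddSubgroup.closure_le] at hle ⊢
  rintro z (rfl | rfl)
  · exact h.mem_inter_iff.2 ⟨hm, k, l, by push_cast; rfl⟩
  · exact h.mem_inter_iff.2 ⟨hle (by simp), k, -l, by push_cast; rfl⟩

theorem AxesData.index_A (h : AxesData Γ R u w) (hA : hv u w 1 1 ∉ Γ) {k l : ℕ}
    (hk : 1 ≤ k) (hl : 1 ≤ l) :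
    hv u w (2 * k : ℕ) (2 * l : ℕ) ∈ Γ ∧ (rhomb u w (2 * k : ℕ) (2 * l : ℕ)).relIndex Γ =
      2 * (Γ ⊓ latticeMap R Γ).relIndex Γ * (k * l) := by
  have hm : hv u w (2 * k : ℕ) (2 * l : ℕ) ∈ Γ := by
    have := (h.hv_red k l 0 0).2 (by simp [hv])
    push_cast at this ⊢; simpa using this
  refine ⟨hm, ?_⟩
  have hle := h.rhomb_le_inter hm
  have e : Γ ⊓ latticeMap R Γ = AddSubgroup.closure {u, w} := by
    ext z
    rw [h.mem_inter_iff, mem_closure_pair_real]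
    constructor
    · rintro ⟨hz, k', l', rfl⟩
      rcases h.hv_mem hz with ⟨i, j, rfl, rfl⟩ | ⟨h1, -⟩
      · refine ⟨i, j, ?_⟩
        simp only [hv]; push_cast; module
      · exact absurd h1 hA
    · rintro ⟨i, j, rfl⟩
      refine ⟨Γ.add_mem (zsmul_real_mem h.hu i) (zsmul_real_mem h.hw j), 2 * i, 2 * j, ?_⟩
      simp only [hv]; push_cast; module
  have hr : (rhomb u w (2 * k : ℕ) (2 * l : ℕ)).relIndex (Γ ⊓ latticeMap R Γ) = 2 * (k * l) := by
    rw [e] at hle ⊢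
    have hd : pdet (hv u w (2 * k : ℕ) (2 * l : ℕ)) (hv u w (2 * k : ℕ) (-(2 * l : ℕ))) ≠ 0 := by
      rw [pdet_hv]
      have : (((2 * k : ℕ) : ℝ) * ((2 * l : ℕ) : ℝ) / 2 : ℝ) ≠ 0 := by positivity
      exact mul_ne_zero (neg_ne_zero.2 this) h.pdet_ne
    have := relIndex_pair h.pdet_ne hd hle (m := k) (n := l) (m' := k) (n' := -l)
      (by simp only [hv]; push_cast; module) (by simp only [hv]; push_cast; module)
    have h2 : |(k : ℝ) * -l - l * k| = 2 * (k * l) := by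
      rw [show (k : ℝ) * -l - l * k = -(2 * (k * l)) by ring, abs_neg, abs_of_nonneg (by positivity)]
    rw [h2] at this
    exact Nat.cast_injective (R := ℝ) (this.trans (by push_cast; ring))
  rw [← AddSubgroup.relIndex_mul_relIndex _ _ _ hle inf_le_left, hr]
  ring

theorem AxesData.index_B (h : AxesData Γ R u w) (hB : hv u w 1 1 ∈ Γ) {k l : ℕ}
    (hk : 1 ≤ k) (hl : 1 ≤ l) (hm : hv u w k l ∈ Γ) :
    (rhomb u w k l).relIndex Γ = (Γ ⊓ latticeMap R Γ).relIndex Γ * (k * l) := by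
  have hle := h.rhomb_le_inter hm
  have hB' : hv u w 1 (-1) ∈ Γ := by
    have := (h.hv_red 0 (-1) 1 1).2 hB
    norm_num at this; exact this
  have e : Γ ⊓ latticeMap R Γ = AddSubgroup.closure {hv u w 1 1, hv u w 1 (-1)} := by
    ext z
    rw [h.mem_inter_iff, mem_closure_pair_real]
    constructor
    · rintro ⟨hz, k', l', rfl⟩
      rcases h.hv_mem hz with ⟨i, j, rfl, rfl⟩ | ⟨h1, i, j, rfl, rfl⟩
      · refine ⟨i + j, i - j, ?_⟩
        simp only [hv]; push_cast; module
      · refine ⟨i + j + 1, i - j, ?_⟩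
        simp only [hv]; push_cast; module
    · rintro ⟨i, j, rfl⟩
      refine ⟨Γ.add_mem (zsmul_real_mem hB i) (zsmul_real_mem hB' j), i + j, i - j, ?_⟩
      simp only [hv]; push_cast; module
  have hr : (rhomb u w k l).relIndex (Γ ⊓ latticeMap R Γ) = k * l := by
    rw [e] at hle ⊢
    have hd : pdet (hv u w k l) (hv u w k (-l)) ≠ 0 := by
      rw [pdet_hv]
      have : ((k : ℝ) * (l : ℝ) / 2 : ℝ) ≠ 0 := by positivity
      exact mul_ne_zero (neg_ne_zero.2 this) h.pdet_ne
    have hd1 : pdet (hv u w 1 1) (hv u w 1 (-1)) ≠ 0 := by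
      rw [pdet_hv]
      exact mul_ne_zero (by norm_num) h.pdet_ne
    have := relIndex_pair hd1 hd hle (m := (k + l) / 2) (n := (k - l) / 2) (m' := (k - l) / 2)
      (n' := (k + l) / 2)
      (by simp only [hv]; module) (by simp only [hv]; module)
    have h2 : |((k : ℝ) + l) / 2 * ((k + l) / 2) - (k - l) / 2 * ((k - l) / 2)| = k * l := by
      rw [show ((k : ℝ) + l) / 2 * ((k + l) / 2) - (k - l) / 2 * ((k - l) / 2) = k * l by ring,
        abs_of_nonneg (by positivity)]
    rw [h2] at this
    exact Nat.cast_injective (R := ℝ) (this.trans (by push_cast; ring))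
  rw [← AddSubgroup.relIndex_mul_relIndex _ _ _ hle inf_le_left, hr]
  ring

theorem AxesData.hv_mem_B (h : AxesData Γ R u w) (hB : hv u w 1 1 ∈ Γ) (k l : ℕ) :
    hv u w k l ∈ Γ ↔ k ≡ l [MOD 2] := by
  constructor
  · intro hm
    rcases h.hv_mem (k := k) (l := l) (by simpa using hm) with ⟨i, j, h1, h2⟩ | ⟨-, i, j, h1, h2⟩ <;>
    · unfold Nat.ModEq; omega
  · intro hm
    unfold Nat.ModEq at hm
    rcases Nat.mod_two_eq_zero_or_one k with h0 | h0
    · obtain ⟨i, rfl⟩ : ∃ i, k = 2 * i := ⟨k / 2, by omega⟩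
      obtain ⟨j, rfl⟩ : ∃ j, l = 2 * j := ⟨l / 2, by omega⟩
      have := (h.hv_red i j 0 0).2 (by simp [hv])
      push_cast at this ⊢; simpa using this
    · obtain ⟨i, rfl⟩ : ∃ i, k = 2 * i + 1 := ⟨k / 2, by omega⟩
      obtain ⟨j, rfl⟩ : ∃ j, l = 2 * j + 1 := ⟨l / 2, by omega⟩
      have := (h.hv_red i j 1 1).2 hB
      push_cast at this ⊢; simpa using this

/-- The slope `α`. -/
theorem AxesData.slope (h : AxesData Γ R u w) (hirr : ¬ IsRationalLattice Γ) :
    ∃ α : ℝ, 0 < α ∧ ∀ k l : ℕ, 1 ≤ k → 1 ≤ l →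
      (((k : ℝ) ^ 2 * ‖u‖ ^ 2 ≤ 3 * (l ^ 2 * ‖w‖ ^ 2)) ↔ α * k ≤ l) ∧
      (((l : ℝ) ^ 2 * ‖w‖ ^ 2 ≤ 3 * (k ^ 2 * ‖u‖ ^ 2)) ↔ (l : ℝ) < 3 * α * k) := by
  have ha := h.a_pos
  have hb := h.b_pos
  refine ⟨√(‖u‖ ^ 2 / (3 * ‖w‖ ^ 2)), by positivity, fun k l hk hl => ?_⟩
  have hα0 : 0 < √(‖u‖ ^ 2 / (3 * ‖w‖ ^ 2)) := by positivity
  have hα : √(‖u‖ ^ 2 / (3 * ‖w‖ ^ 2)) ^ 2 * (3 * ‖w‖ ^ 2) = ‖u‖ ^ 2 := by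
    rw [Real.sq_sqrt (by positivity)]; exact div_mul_cancel₀ _ (by positivity)
  set α := √(‖u‖ ^ 2 / (3 * ‖w‖ ^ 2))
  constructor
  · rw [← pow_le_pow_iff_left₀ (a := α * k) (by positivity) (by positivity) two_ne_zero, ← hα]
    rw [show (k : ℝ) ^ 2 * (α ^ 2 * (3 * ‖w‖ ^ 2)) = (α * k) ^ 2 * (3 * ‖w‖ ^ 2) by ring,
      show 3 * ((l : ℝ) ^ 2 * ‖w‖ ^ 2) = l ^ 2 * (3 * ‖w‖ ^ 2) by ring]
    exact mul_le_mul_iff_left₀ (by positivity)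
  · have hne : (l : ℝ) ^ 2 * ‖w‖ ^ 2 ≠ 3 * (k ^ 2 * ‖u‖ ^ 2) := by
      intro he
      have := (h.irr hirr (p := -(3 * (k : ℚ) ^ 2)) (q := (l : ℚ) ^ 2)
        (by push_cast; linarith)).2
      have h2 : l = 0 := by simpa using this
      omega
    rw [le_iff_lt_or_eq, or_iff_left hne,
      ← pow_lt_pow_iff_left₀ (a := (l : ℝ)) (b := 3 * α * k) (by positivity) (by positivity)
        two_ne_zero, ← hα]
    rw [show 3 * ((k : ℝ) ^ 2 * (α ^ 2 * (3 * ‖w‖ ^ 2))) = (3 * α * k) ^ 2 * ‖w‖ ^ 2 by ring]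
    exact mul_lt_mul_iff_left₀ hb

theorem AxesData.count_bound (h : AxesData Γ R u w) (hirr : ¬ IsRationalLattice Γ)
    (hS : (Γ ⊓ latticeMap R Γ).relIndex Γ ≠ 0) :
    ∃ C : ℝ, ∀ n : ℕ, 1 ≤ n → |∑ k ∈ Finset.Icc 1 n, (countWR Γ k : ℝ) -
      Real.log 3 / (4 * ((Γ ⊓ latticeMap R Γ).relIndex Γ : ℝ)) * n| ≤ C * √n := by
  obtain ⟨α, hα, hs⟩ := h.slope hirr
  by_cases hB : hv u w 1 1 ∈ Γ
  · have := counting_part α hα 2 ((Γ ⊓ latticeMap R Γ).relIndex Γ) two_pos (Nat.pos_of_ne_zero hS)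
      (countWR Γ) (fun n _ => by
        rw [h.count_eq hirr n]
        refine Nat.card_congr (Equiv.subtypeEquivRight fun p => ?_)
        refine and_congr_right fun h1 => and_congr_right fun h2 => ?_
        rw [← h.hv_mem_B hB]
        refine and_congr_right fun h3 => ?_
        rw [h.index_B hB h1 h2 h3, (hs _ _ h1 h2).1, (hs _ _ h1 h2).2]
        tauto)
    have e : (2 * ((2 : ℕ) : ℝ) * ((Γ ⊓ latticeMap R Γ).relIndex Γ : ℝ)) =
      4 * ((Γ ⊓ latticeMap R Γ).relIndex Γ : ℝ) := by push_cast; ring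
    rwa [e] at this
  · have := counting_part α hα 1 (2 * (Γ ⊓ latticeMap R Γ).relIndex Γ) one_pos
      (Nat.mul_pos two_pos (Nat.pos_of_ne_zero hS))
      (countWR Γ) (fun n _ => by
        rw [h.count_eq hirr n]
        symm
        have key : ∀ k l : ℕ, 1 ≤ k → 1 ≤ l →
            ((α * k ≤ l ∧ (l : ℝ) < 3 * α * k) ↔
            (((2 * l : ℕ) : ℝ) ^ 2 * ‖w‖ ^ 2 ≤ 3 * (((2 * k : ℕ) : ℝ) ^ 2 * ‖u‖ ^ 2) ∧
            ((2 * k : ℕ) : ℝ) ^ 2 * ‖u‖ ^ 2 ≤ 3 * (((2 * l : ℕ) : ℝ) ^ 2 * ‖w‖ ^ 2))) := by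
          intro k l h1 h2
          rw [(hs (2 * k) (2 * l) (by omega) (by omega)).1,
            (hs (2 * k) (2 * l) (by omega) (by omega)).2]
          push_cast
          constructor
          · rintro ⟨x, y⟩; constructor <;> linarith
          · rintro ⟨x, y⟩; constructor <;> linarith
        refine Nat.card_congr (Equiv.ofBijective (fun p => ⟨(2 * p.1.1, 2 * p.1.2), ?_⟩) ⟨?_, ?_⟩)
        · obtain ⟨⟨k, l⟩, h1, h2, h3, h4, h5, h6⟩ := p
          dsimp only at *
          obtain ⟨i1, i2⟩ := h.index_A hB h1 h2
          obtain ⟨j1, j2⟩ := (key k l h1 h2).1 ⟨h4, h5⟩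
          exact ⟨by omega, by omega, i1, j1, j2, i2.trans h6⟩
        · rintro ⟨⟨k, l⟩, hp⟩ ⟨⟨k', l'⟩, hp'⟩ he
          simp only [Subtype.mk.injEq, Prod.mk.injEq] at he ⊢
          omega
        · rintro ⟨⟨k, l⟩, h1, h2, h3, h4, h5, h6⟩
          dsimp only at *
          rcases h.hv_mem (k := k) (l := l) (by simpa using h3) with ⟨i, j, hi, hj⟩ | ⟨hb, -⟩
          · obtain ⟨i, rfl⟩ := Int.eq_ofNat_of_zero_le (a := i) (by omega)
            obtain ⟨j, rfl⟩ := Int.eq_ofNat_of_zero_le (a := j) (by omega)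
            obtain rfl : k = 2 * i := by omega
            obtain rfl : l = 2 * j := by omega
            have h1' : 1 ≤ i := by omega
            have h2' : 1 ≤ j := by omega
            obtain ⟨i1, i2⟩ := h.index_A hB h1' h2'
            obtain ⟨j1, j2⟩ := (key i j h1' h2').2 ⟨h4, h5⟩
            exact ⟨⟨(i, j), h1', h2', Nat.modEq_one, j1, j2, i2.symm.trans h6⟩, rfl⟩
          · exact absurd hb hB)
    have e : (2 * ((1 : ℕ) : ℝ) * ((2 * (Γ ⊓ latticeMap R Γ).relIndex Γ : ℕ) : ℝ)) =
      4 * ((Γ ⊓ latticeMap R Γ).relIndex Γ : ℝ) := by push_cast; ring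
    rwa [e] at this

end index

theorem non_rational_wellRounded_dirichlet_series_continuation
    (Γ : AddSubgroup EucPlane) (hΓ : IsPlanarLattice Γ)
    (hirr : ¬ IsRationalLattice Γ)
    (hwr : ∃ Λ : AddSubgroup EucPlane, Λ ≤ Γ ∧ (Λ.addSubgroupOf Γ).index ≠ 0 ∧
      IsWellRounded Λ)
    (R : EucPlane ≃ₗᵢ[ℝ] EucPlane) (hR : IsCoincidenceReflection Γ R) :
    (∀ s : ℂ, 1 < s.re → Summable (fun n : ℕ => (countWR Γ n : ℂ) * (n : ℂ) ^ (-s))) ∧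
    ∃ G : ℂ → ℂ, DifferentiableOn ℂ G {s : ℂ | 1 / 2 < s.re} ∧
      ∀ s : ℂ, 1 < s.re →
        ∑' n : ℕ, (countWR Γ n : ℂ) * (n : ℂ) ^ (-s) =
          G s + (Real.log 3 / (4 * (((Γ ⊓ latticeMap R Γ).addSubgroupOf Γ).index : ℝ)) : ℂ) /
            (s - 1) := by
  obtain ⟨u, w, h⟩ := exists_axes hΓ hR
  obtain ⟨C, hC⟩ := h.count_bound hirr hR.2
  obtain ⟨h1, G, hG, h2⟩ := analytic_part (countWR Γ) _ C hC
  refine ⟨h1, G, hG, fun s hs => ?_⟩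
  rw [h2 s hs]
  push_cast
  rfl
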